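/- arXiv:1407.7347 — 2 statements merged into one kernel-verified Lean document; each statement's English description precedes it below -/
import Mathlib

section
/- Let ρ̄ > 0, M > 0 and set A₀ = ρ̄² (the normalization making the background sound speed equal to 1). Let φ_a ∈ C^∞([0,∞)×ℝ²) be radially symmetric in x, vanish for |x| ≥ t + M, and satisfy the decay estimates |Λ^α ∂^β φ_a(t,x)| ≤ C_{αβ} ε σ₋(t,x)^{−|β|} σ₊(t,x)^{−1/2} for all iterated compositions Λ^α of the fields in Λ and all derivative multi-indices β. Define u_a = ∇_x φ_a and ρ_a = (A₀/(1 + 2∂_tφ_a + |∇_xφ_a|²))^{1/2}. Then, for ε > 0 sufficiently small: (1) (|Λ^α(ρ_a − ρ̄)| + |Λ^α u_a|)(t,x) ≤ C_α ε σ₋(t,x)^{−1} σ₊(t,x)^{−1/2} for all (t,x); (2) |∂Λ^α(ρ_a − ρ̄)(t,x)| + |∂Λ^α u_a(t,x)| ≤ C_α ε ⟨t⟩^{−5/2} whenever |x| ≤ lt + M with 0 ≤ l < 1; (3) for every k ∈ ℕ, 0 ≤ δ < 1 and C > 0, |X^k u_a(t,x)| ≤ C_{kδ} ε ⟨t⟩^{−5/2+δ}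 whenever |x| ≤ C⟨t⟩^{δ}; with all constants C_α, C_{kδ} independent of ε and (t,x). -/
/-!
Bounds `Λ^α f = O(W)` valid for all words `α` at once are stable under sums, products and
composition with smooth functions, by the Leibniz and chain rules for the derivations `Λ_a`. The
density deviation `ρ_a - ρ̄` is a smooth function, vanishing at `0`, of `w = 2∂_tφ_a + |∇φ_a|²`,
which is `O(ε)`; so it inherits from the derivatives of `φ_a` the weight `ε σ₋^{-1} σ₊^{-1/2}`, and
its gradient inherits the weight `ε σ₋^{-2} σ₊^{-1/2}` of the second derivatives.
As `Λ_a` is an affine vector field, `[∂_k, Λ_a]` is a constant combination of `∂_0, ∂_1, ∂_2`, so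
`∂Λ^α` is controlled by `Λ^β ∂`. Inside a cone `|x| ≤ lt + M` with `l < 1` the weight `σ₋` is
comparable to `⟨t⟩`, whence `⟨t⟩^{-5/2}`. Finally `X^k ∇φ_a` is odd in `x`, so it vanishes at
`x = 0`, and integrating its gradient along a ray costs only the factor `|x| ≤ C⟨t⟩^δ`.
-/

noncomputable section

open Real MeasureTheory Set


/-- A function of time `t` and space `(x, y)`. -/
abbrev F3 : Type := ℝ → ℝ → ℝ → ℝ

/-- Partial derivative in time. -/
def pt (f : F3) : F3 := fun t x y => deriv (fun s => f s x y) t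
/-- Partial derivative in the first space variable. -/
def px (f : F3) : F3 := fun t x y => deriv (fun s => f t s y) x
/-- Partial derivative in the second space variable. -/
def py (f : F3) : F3 := fun t x y => deriv (fun s => f t x s) y

/-- `∂ = (∂_t, ∂_1, ∂_2)`. -/
def pdi : Fin 3 → F3 → F3 := ![pt, px, py]

/-- The scaling field `X = t∂_t + x₁∂₁ + x₂∂₂`. -/
def Xf (f : F3) : F3 := fun t x y => t * pt f t x y + x * px f t x y + y * py f t x y
/-- The rotation field `Ω = x₁∂₂ − x₂∂₁`. -/
def Om (f : F3) : F3 := fun t x y => x * py f t x y - y * px f t x y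
/-- The Lorentz boost `L₁ = t∂₁ + x₁∂_t`. -/
def L1f (f : F3) : F3 := fun t x y => t * px f t x y + x * pt f t x y
/-- The Lorentz boost `L₂ = t∂₂ + x₂∂_t`. -/
def L2f (f : F3) : F3 := fun t x y => t * py f t x y + y * pt f t x y

/-- The family `Γ = (∂_t, ∂_1, ∂_2, X)`. -/
def GammaF : Fin 4 → F3 → F3 := ![pt, px, py, Xf]

/-- Iterated composition `Γ^α` over a word `α`. -/
def GIter : List (Fin 4) → F3 → F3
  | [], f => f
  | a :: l, f => GammaF a (GIter l f)

/-- The family `Λ = (∂_t, ∂_1, ∂_2, Ω, X, L₁, L₂)`. -/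
def LamF : Fin 7 → F3 → F3 := ![pt, px, py, Om, Xf, L1f, L2f]

/-- Iterated composition `Λ^α` over a word `α`. -/
def LIter : List (Fin 7) → F3 → F3
  | [], f => f
  | a :: l, f => LamF a (LIter l f)

/-- Iterated composition `∂^β` over a word `β`. -/
def PIter : List (Fin 3) → F3 → F3
  | [], f => f
  | a :: l, f => pdi a (PIter l f)

/-- `r = |x|`. -/
def rad (x y : ℝ) : ℝ := Real.sqrt (x ^ 2 + y ^ 2)
/-- `σ₋(t,x) = 1 + |t − |x||`. -/
def sm (t x y : ℝ) : ℝ := 1 + |t - rad x y|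
/-- `σ₊(t,x) = 1 + t + |x|`. -/
def sp (t x y : ℝ) : ℝ := 1 + t + rad x y

/-- `f` is a `C^∞` function of `(t, x)`. -/
def Smooth3 (f : F3) : Prop := ContDiff ℝ (⊤ : ℕ∞) (fun p : ℝ × ℝ × ℝ => f p.1 p.2.1 p.2.2)

/-- `Z₁ = ∂₁ + (x₁/|x|)∂_t`. -/
def Z1 (f : F3) : F3 := fun t x y => px f t x y + (x / rad x y) * pt f t x y
/-- `Z₂ = ∂₂ + (x₂/|x|)∂_t`. -/
def Z2 (f : F3) : F3 := fun t x y => py f t x y + (y / rad x y) * pt f t x y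
/-- The family `Z = (Z₁, Z₂)`. -/
def Zi : Fin 2 → F3 → F3 := ![Z1, Z2]

/-- `f` is radially symmetric in the space variables. -/
def RadialF (f : F3) : Prop := ∀ t x y x' y', rad x y = rad x' y' → f t x y = f t x' y'

/-- The hypotheses on the potential `φ_a`: smooth, radially symmetric in `x`,
vanishing for `|x| ≥ t + M`, with the decay estimates
`|Λ^α ∂^β φ_a| ≤ C_{αβ} ε σ₋^{−|β|} σ₊^{−1/2}` (constants given by `Cc`). -/
def HypPhiA (M eps : ℝ) (Cc : ℕ → ℕ → ℝ) (φa : F3) : Prop :=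
  Smooth3 φa ∧ RadialF φa ∧
  (∀ t x y, 0 ≤ t → t + M ≤ rad x y → φa t x y = 0) ∧
  (∀ α : List (Fin 7), ∀ β : List (Fin 3), ∀ t x y, 0 ≤ t →
    |LIter α (PIter β φa) t x y| ≤
      Cc α.length β.length * eps * (sp t x y) ^ (-(1/2 : ℝ)) / (sm t x y) ^ β.length)

/-- The approximate density `ρ_a = (A₀/(1 + 2∂_tφ_a + |∇φ_a|²))^{1/2}` with `A₀ = ρ̄²`. -/
def rhoA (ρbar : ℝ) (φa : F3) : F3 := fun t x y =>
  Real.sqrt (ρbar ^ 2 / (1 + 2 * pt φa t x y + (px φa t x y) ^ 2 + (py φa t x y) ^ 2))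

open Asymptotics Filter Topology
open scoped ContDiff

/-! ### The fields as directional derivatives -/

/-- The value at the origin of the vector field `Λ_a` on `ℝ × ℝ × ℝ`. -/
def lamConst : Fin 7 → ℝ × ℝ × ℝ :=
  ![(1, 0, 0), (0, 1, 0), (0, 0, 1), 0, 0, 0, 0]

/-- The linear part of the affine vector field `Λ_a` on `ℝ × ℝ × ℝ`. -/
def lamLinear : Fin 7 → ℝ × ℝ × ℝ →L[ℝ] ℝ × ℝ × ℝ :=
  let t := ContinuousLinearMap.fst ℝ ℝ (ℝ × ℝ)
  let x := (ContinuousLinearMap.fst ℝ ℝ ℝ).comp (ContinuousLinearMap.snd ℝ ℝ (ℝ × ℝ))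
  let y := (ContinuousLinearMap.snd ℝ ℝ ℝ).comp (ContinuousLinearMap.snd ℝ ℝ (ℝ × ℝ))
  ![0, 0, 0, .prod 0 (.prod (-y) x), .id ℝ _, .prod x (.prod t 0), .prod y (.prod 0 t)]

/-- The vector field `Λ_a`, viewed as an affine map of `ℝ × ℝ × ℝ` into itself. -/
def lamVec (a : Fin 7) (p : ℝ × ℝ × ℝ) : ℝ × ℝ × ℝ := lamConst a + lamLinear a p

lemma hasFDerivAt_lamVec (a : Fin 7) (p : ℝ × ℝ × ℝ) :
    HasFDerivAt (lamVec a) (lamLinear a) p :=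
  (lamLinear a).hasFDerivAt.const_add (lamConst a)

/-- The index of `∂_k` among the fields `Λ`. -/
def pdIdx (k : Fin 3) : Fin 7 := k.castLE (by norm_num)

lemma pdi_eq_LamF (k : Fin 3) : pdi k = LamF (pdIdx k) := by
  fin_cases k <;> rfl

lemma lamLinear_pdIdx (k : Fin 3) : lamLinear (pdIdx k) = 0 := by
  fin_cases k <;> rfl

lemma lamVec_pdIdx (k : Fin 3) (p : ℝ × ℝ × ℝ) : lamVec (pdIdx k) p = lamConst (pdIdx k) := by
  simp [lamVec, lamLinear_pdIdx]

lemma exists_eq_sum_lamConst (v : ℝ × ℝ × ℝ) :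
    ∃ c : Fin 3 → ℝ, v = ∑ m, c m • lamConst (pdIdx m) :=
  ⟨![v.1, v.2.1, v.2.2], by simp [Fin.sum_univ_three, lamConst, pdIdx]⟩

section DirectionalDerivative

variable {f g : F3}

lemma fderiv_uncurry_apply {t x y : ℝ} (hf : DifferentiableAt ℝ ↿f (t, x, y)) (u v w : ℝ) :
    fderiv ℝ ↿f (t, x, y) (u, v, w) = u * pt f t x y + v * px f t x y + w * py f t x y := by
  have along_t : pt f t x y = fderiv ℝ ↿f (t, x, y) (1, 0, 0) :=
    (hf.hasFDerivAt.comp_hasDerivAt (f := fun s => (s, x, y)) t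
      ((hasDerivAt_id t).prodMk (hasDerivAt_const t (x, y)))).deriv
  have along_x : px f t x y = fderiv ℝ ↿f (t, x, y) (0, 1, 0) :=
    (hf.hasFDerivAt.comp_hasDerivAt (f := fun s => (t, s, y)) x
      ((hasDerivAt_const x t).prodMk ((hasDerivAt_id x).prodMk (hasDerivAt_const x y)))).deriv
  have along_y : py f t x y = fderiv ℝ ↿f (t, x, y) (0, 0, 1) :=
    (hf.hasFDerivAt.comp_hasDerivAt (f := fun s => (t, x, s)) y
      ((hasDerivAt_const y t).prodMk ((hasDerivAt_const y x).prodMk (hasDerivAt_id y)))).deriv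
  have basis : (u, v, w) = u • ((1, 0, 0) : ℝ × ℝ × ℝ) + v • (0, 1, 0) + w • (0, 0, 1) := by simp
  rw [basis, map_add, map_add, map_smul, map_smul, map_smul, ← along_t, ← along_x, ← along_y]
  simp only [smul_eq_mul]

lemma Smooth3.differentiable (hf : Smooth3 f) : Differentiable ℝ ↿f :=
  ContDiff.differentiable hf (by simp)

lemma LamF_apply {t x y : ℝ} (hf : DifferentiableAt ℝ ↿f (t, x, y)) (a : Fin 7) :
    LamF a f t x y = fderiv ℝ ↿f (t, x, y) (lamVec a (t, x, y)) := by
  rw [fderiv_uncurry_apply hf]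
  fin_cases a <;> simp [LamF, lamVec, lamConst, lamLinear, Xf, Om, L1f, L2f] <;> ring

lemma uncurry_LamF (hf : Smooth3 f) (a : Fin 7) :
    ↿(LamF a f) = fun p => fderiv ℝ ↿f p (lamVec a p) :=
  funext fun p => LamF_apply (hf.differentiable p) a

lemma Smooth3.lamF (hf : Smooth3 f) (a : Fin 7) : Smooth3 (LamF a f) := by
  change ContDiff ℝ ∞ ↿(LamF a f)
  rw [uncurry_LamF hf]
  have hvec : ContDiff ℝ ∞ (lamVec a) := contDiff_const.add (lamLinear a).contDiff
  exact (ContDiff.fderiv_right hf le_rfl).clm_apply hvec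

lemma Smooth3.pdi (hf : Smooth3 f) (k : Fin 3) : Smooth3 (pdi k f) := by
  rw [pdi_eq_LamF]
  exact hf.lamF _

lemma Smooth3.lIter (hf : Smooth3 f) (α : List (Fin 7)) : Smooth3 (LIter α f) := by
  induction α with
  | nil => exact hf
  | cons a _ ih => exact ih.lamF a

lemma Smooth3.add (hf : Smooth3 f) (hg : Smooth3 g) : Smooth3 (f + g) := ContDiff.add hf hg

lemma Smooth3.mul (hf : Smooth3 f) (hg : Smooth3 g) : Smooth3 (f * g) := ContDiff.mul hf hg

lemma Smooth3.const_smul (c : ℝ) (hf : Smooth3 f) : Smooth3 (c • f) := ContDiff.const_smul c hf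

/-- Composition of a function of one variable with a function of `(t, x)`. -/
def postcomp (K : ℝ → ℝ) (f : F3) : F3 := fun t x y => K (f t x y)

lemma Smooth3.postcomp {K : ℝ → ℝ} (hK : ContDiff ℝ ∞ K) (hf : Smooth3 f) :
    Smooth3 (postcomp K f) :=
  ContDiff.comp hK hf

lemma LamF_add (hf : Smooth3 f) (hg : Smooth3 g) (a : Fin 7) :
    LamF a (f + g) = LamF a f + LamF a g := by
  funext t x y
  have hf' := hf.differentiable (t, x, y)
  have hg' := hg.differentiable (t, x, y)
  calc LamF a (f + g) t x y = fderiv ℝ (↿f + ↿g) (t, x, y) (lamVec a (t, x, y)) :=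
        LamF_apply (hf'.add hg') a
    _ = LamF a f t x y + LamF a g t x y := by
        rw [fderiv_add hf' hg', add_apply, LamF_apply hf', LamF_apply hg']

lemma LamF_const_smul (c : ℝ) (hf : Smooth3 f) (a : Fin 7) :
    LamF a (c • f) = c • LamF a f := by
  funext t x y
  have hf' := hf.differentiable (t, x, y)
  calc LamF a (c • f) t x y = fderiv ℝ (c • ↿f) (t, x, y) (lamVec a (t, x, y)) :=
        LamF_apply (hf'.const_smul c) a
    _ = c • LamF a f t x y := by
        rw [fderiv_const_smul hf', smul_apply, LamF_apply hf']

lemma LamF_mul (hf : Smooth3 f) (hg : Smooth3 g) (a : Fin 7) :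
    LamF a (f * g) = LamF a f * g + f * LamF a g := by
  funext t x y
  have hf' := hf.differentiable (t, x, y)
  have hg' := hg.differentiable (t, x, y)
  calc LamF a (f * g) t x y = fderiv ℝ (↿f * ↿g) (t, x, y) (lamVec a (t, x, y)) :=
        LamF_apply (hf'.mul hg') a
    _ = f t x y * LamF a g t x y + g t x y * LamF a f t x y := by
        rw [fderiv_mul hf' hg', LamF_apply hf', LamF_apply hg']
        rfl
    _ = LamF a f t x y * g t x y + f t x y * LamF a g t x y := by ring

lemma LamF_postcomp {K : ℝ → ℝ} (hK : ContDiff ℝ ∞ K) (hf : Smooth3 f) (a : Fin 7) :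
    LamF a (postcomp K f) = postcomp (deriv K) f * LamF a f := by
  funext t x y
  have hf' := hf.differentiable (t, x, y)
  have hK' : HasDerivAt K (deriv K (f t x y)) (↿f (t, x, y)) :=
    (hK.differentiable (by simp) _).hasDerivAt
  have hcomp := hK'.comp_hasFDerivAt (t, x, y) hf'.hasFDerivAt
  calc LamF a (postcomp K f) t x y = fderiv ℝ (K ∘ ↿f) (t, x, y) (lamVec a (t, x, y)) :=
        LamF_apply hcomp.differentiableAt a
    _ = deriv K (f t x y) * LamF a f t x y := by
        rw [hcomp.fderiv, smul_apply, LamF_apply hf', smul_eq_mul]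

/-- The commutator of the constant field `∂_k` with the affine field `Λ_a` is constant. -/
lemma exists_pdi_LamF_eq (k : Fin 3) (a : Fin 7) :
    ∃ c : Fin 3 → ℝ, ∀ f, Smooth3 f →
      pdi k (LamF a f) = LamF a (pdi k f) + ∑ m, c m • pdi m f := by
  obtain ⟨c, hc⟩ := exists_eq_sum_lamConst (lamLinear a (lamConst (pdIdx k)))
  refine ⟨c, fun f hf => ?_⟩
  funext t x y
  set p : ℝ × ℝ × ℝ := (t, x, y)
  have bracket : VectorField.lieBracket ℝ (lamVec (pdIdx k)) (lamVec a) p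
      = ∑ m, c m • lamVec (pdIdx m) p := by
    rw [VectorField.lieBracket, (hasFDerivAt_lamVec a p).fderiv,
      (hasFDerivAt_lamVec (pdIdx k) p).fderiv, lamLinear_pdIdx]
    simp only [lamVec_pdIdx, hc, zero_apply, sub_zero]
  have key := VectorField.fderiv_apply_lieBracket (f := ↿f) (V := lamVec (pdIdx k))
    (W := lamVec a) (x := p) (ContDiff.contDiffAt hf)
    (by simpa using WithTop.coe_le_coe.2 (le_top : (2 : ℕ∞) ≤ ⊤))
    (hasFDerivAt_lamVec _ p).differentiableAt (hasFDerivAt_lamVec _ p).differentiableAt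
  rw [bracket, map_sum, ← uncurry_LamF hf, ← uncurry_LamF hf] at key
  simp only [pdi_eq_LamF, Pi.add_apply, Finset.sum_apply, Pi.smul_apply]
  rw [LamF_apply ((hf.lamF a).differentiable p), LamF_apply ((hf.lamF _).differentiable p)]
  simp only [LamF_apply (hf.differentiable p)]
  simp only [map_smul] at key
  linarith

lemma LIter_append_singleton (α : List (Fin 7)) (a : Fin 7) (f : F3) :
    LIter (α ++ [a]) f = LIter α (LamF a f) := by
  induction α with
  | nil => rfl
  | cons b α ih => exact congrArg (LamF b) ih

lemma LIter_add (hf : Smooth3 f) (hg : Smooth3 g) (α : List (Fin 7)) :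
    LIter α (f + g) = LIter α f + LIter α g := by
  induction α with
  | nil => rfl
  | cons a α ih => exact (congrArg (LamF a) ih).trans (LamF_add (hf.lIter α) (hg.lIter α) a)

lemma LIter_const_smul (c : ℝ) (hf : Smooth3 f) (α : List (Fin 7)) :
    LIter α (c • f) = c • LIter α f := by
  induction α with
  | nil => rfl
  | cons a α ih => exact (congrArg (LamF a) ih).trans (LamF_const_smul c (hf.lIter α) a)

lemma eventuallyEq_uncurry_LamF {p : ℝ × ℝ × ℝ} (h : ↿f =ᶠ[𝓝 p] ↿g) (a : Fin 7) :
    ↿(LamF a f) =ᶠ[𝓝 p] ↿(LamF a g) := by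
  filter_upwards [eventually_eventually_nhds.2 h] with ⟨t, x, y⟩ hq
  have eq_pt : pt f t x y = pt g t x y :=
    Filter.EventuallyEq.deriv_eq
      ((by fun_prop : Continuous fun s : ℝ => (s, x, y)).continuousAt.eventually hq)
  have eq_px : px f t x y = px g t x y :=
    Filter.EventuallyEq.deriv_eq
      ((by fun_prop : Continuous fun s : ℝ => (t, s, y)).continuousAt.eventually hq)
  have eq_py : py f t x y = py g t x y :=
    Filter.EventuallyEq.deriv_eq
      ((by fun_prop : Continuous fun s : ℝ => (t, x, s)).continuousAt.eventually hq)
  change LamF a f t x y = LamF a g t x y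
  fin_cases a <;> simp [LamF, Om, Xf, L1f, L2f, eq_pt, eq_px, eq_py]

lemma eventuallyEq_uncurry_LIter {p : ℝ × ℝ × ℝ} (h : ↿f =ᶠ[𝓝 p] ↿g) (α : List (Fin 7)) :
    ↿(LIter α f) =ᶠ[𝓝 p] ↿(LIter α g) := by
  induction α with
  | nil => exact h
  | cons a _ ih => exact eventuallyEq_uncurry_LamF ih a

end DirectionalDerivative

/-! ### Weighted bounds stable under all the fields -/

section Asymptotics

variable {ι : Type*} {l : Filter ι} {w : ι → ℝ}

lemma isBigO_one_comp {K : ℝ → ℝ} (hK : Continuous K) (hw : w =O[l] (1 : ι → ℝ)) :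
    (fun i => K (w i)) =O[l] (1 : ι → ℝ) := by
  obtain ⟨c, hc⟩ := hw.bound
  obtain ⟨C, hC⟩ := (isCompact_closedBall 0 c).exists_bound_of_continuousOn hK.continuousOn
  refine .of_bound C (hc.mono fun i hi => ?_)
  simpa using hC (w i) (by simpa using hi)

lemma isBigO_comp_of_map_zero {G : ℝ → ℝ} (hG : ContDiff ℝ 1 G) (hG0 : G 0 = 0)
    (hw : w =O[l] (1 : ι → ℝ)) : (fun i => G (w i)) =O[l] w := by
  obtain ⟨c, hc⟩ := hw.bound
  obtain ⟨C, hC⟩ := (isCompact_closedBall 0 c).exists_bound_of_continuousOn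
    (hG.continuous_deriv_one).continuousOn
  refine .of_bound C (hc.mono fun i hi => ?_)
  have hwi : w i ∈ Metric.closedBall 0 c := by simpa using hi
  have h0 : (0 : ℝ) ∈ Metric.closedBall 0 c :=
    Metric.mem_closedBall_self (dist_nonneg.trans hwi)
  simpa [hG0] using (convex_closedBall (0 : ℝ) c).norm_image_sub_le_of_norm_deriv_le
    (fun s _ => hG.differentiable one_ne_zero s) hC h0 hwi

end Asymptotics

section LamBigO

variable {I : Type*} {l : Filter (I × ℝ × ℝ × ℝ)} {V W : I × ℝ × ℝ × ℝ → ℝ} {f g : I → F3}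

/-- The family `f` of smooth functions satisfies `Λ^α f = O(W)` for every word `α`, along the
filter `l` on parameters and points. Uniformity in the parameter `i : I` is what makes the constants
independent of `ε` and of the potential. -/
structure LamBigO (l : Filter (I × ℝ × ℝ × ℝ)) (W : I × ℝ × ℝ × ℝ → ℝ) (f : I → F3) : Prop where
  smooth (i : I) : Smooth3 (f i)
  isBigO (α : List (Fin 7)) : ↿(fun i => LIter α (f i)) =O[l] W

namespace LamBigO

lemma trans (hf : LamBigO l V f) (h : V =O[l] W) : LamBigO l W f :=
  ⟨hf.smooth, fun α => (hf.isBigO α).trans h⟩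

lemma add (hf : LamBigO l W f) (hg : LamBigO l W g) : LamBigO l W (fun i => f i + g i) where
  smooth i := (hf.smooth i).add (hg.smooth i)
  isBigO α := by
    simp only [LIter_add (hf.smooth _) (hg.smooth _)]
    exact (hf.isBigO α).add (hg.isBigO α)

lemma const_smul (c : ℝ) (hf : LamBigO l W f) : LamBigO l W (fun i => c • f i) where
  smooth i := (hf.smooth i).const_smul c
  isBigO α := by
    simp only [LIter_const_smul c (hf.smooth _)]
    exact (hf.isBigO α).const_smul_left c

lemma lamF (hf : LamBigO l W f) (a : Fin 7) : LamBigO l W (fun i => LamF a (f i)) where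
  smooth i := (hf.smooth i).lamF a
  isBigO α := by
    simp only [← LIter_append_singleton]
    exact hf.isBigO (α ++ [a])

lemma mul (hf : LamBigO l V f) (hg : LamBigO l W g) :
    LamBigO l (V * W) (fun i => f i * g i) where
  smooth i := (hf.smooth i).mul (hg.smooth i)
  isBigO α := by
    induction α using List.reverseRecOn generalizing f g with
    | nil => exact (hf.isBigO []).mul (hg.isBigO [])
    | append_singleton α a ih =>
      have leibniz (i : I) : LIter (α ++ [a]) (f i * g i)
          = LIter α (LamF a (f i) * g i) + LIter α (f i * LamF a (g i)) := by
        have sf := hf.smooth i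
        have sg := hg.smooth i
        rw [LIter_append_singleton, LamF_mul sf sg,
          LIter_add ((sf.lamF a).mul sg) (sf.mul (sg.lamF a))]
      simp only [leibniz]
      exact (ih (hf.lamF a) hg).add (ih hf (hg.lamF a))

lemma postcomp_mul {K : ℝ → ℝ} (hK : ContDiff ℝ ∞ K) (hf : LamBigO l 1 f)
    (hg : LamBigO l W g) : LamBigO l W (fun i => postcomp K (f i) * g i) where
  smooth i := ((hf.smooth i).postcomp hK).mul (hg.smooth i)
  isBigO α := by
    induction α using List.reverseRecOn generalizing K g with
    | nil =>
      have h := (isBigO_one_comp hK.continuous (hf.isBigO [])).mul (hg.isBigO [])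
      simp only [Pi.one_apply, one_mul] at h
      exact h
    | append_singleton α a ih =>
      have hK' : ContDiff ℝ ∞ (deriv K) := (contDiff_infty_iff_deriv.1 hK).2
      have chain (i : I) : LIter (α ++ [a]) (postcomp K (f i) * g i)
          = LIter α (postcomp (deriv K) (f i) * (LamF a (f i) * g i))
            + LIter α (postcomp K (f i) * LamF a (g i)) := by
        have sf := hf.smooth i
        have sg := hg.smooth i
        rw [LIter_append_singleton, LamF_mul (sf.postcomp hK) sg, LamF_postcomp hK sf, mul_assoc,
          LIter_add ((sf.postcomp hK').mul ((sf.lamF a).mul sg)) ((sf.postcomp hK).mul (sg.lamF a))]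
      have hfg : LamBigO l W (fun i => LamF a (f i) * g i) := by
        simpa using (hf.lamF a).mul hg
      simp only [chain]
      exact (ih hK' hfg).add (ih hK (hg.lamF a))

lemma postcomp {G : ℝ → ℝ} (hG : ContDiff ℝ ∞ G) (hG0 : G 0 = 0)
    (hW : W =O[l] (1 : I × ℝ × ℝ × ℝ → ℝ)) (hf : LamBigO l W f) :
    LamBigO l W (fun i => postcomp G (f i)) where
  smooth i := (hf.smooth i).postcomp hG
  isBigO α := by
    induction α using List.reverseRecOn with
    | nil =>
      have hf0 := hf.isBigO []
      exact (isBigO_comp_of_map_zero (hG.of_le (by simp)) hG0 (hf0.trans hW)).trans hf0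
    | append_singleton α a _ =>
      simp only [LIter_append_singleton, LamF_postcomp hG (hf.smooth _)]
      exact (postcomp_mul (contDiff_infty_iff_deriv.1 hG).2 (hf.trans hW) (hf.lamF a)).isBigO α

lemma pdi_lamF (hf : ∀ i, Smooth3 (f i)) (h : ∀ k, LamBigO l W (fun i => pdi k (f i)))
    (a : Fin 7) (k : Fin 3) : LamBigO l W (fun i => pdi k (LamF a (f i))) := by
  obtain ⟨c, hc⟩ := exists_pdi_LamF_eq k a
  simp only [hc _ (hf _), Fin.sum_univ_three]
  exact ((h k).lamF a).add
    ((((h 0).const_smul _).add ((h 1).const_smul _)).add ((h 2).const_smul _))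

lemma isBigO_pdi_LIter (hf : ∀ i, Smooth3 (f i)) (h : ∀ k, LamBigO l W (fun i => pdi k (f i)))
    (k : Fin 3) (α : List (Fin 7)) : ↿(fun i => pdi k (LIter α (f i))) =O[l] W := by
  induction α using List.reverseRecOn generalizing f with
  | nil => exact (h k).isBigO []
  | append_singleton α a ih =>
    simp only [LIter_append_singleton]
    exact ih (fun i => (hf i).lamF a) (pdi_lamF hf h a)

end LamBigO

/-- `f` is `O(V)` and its gradient is `O(W)`, both together with all `Λ`-derivatives. -/
structure GradBigO (l : Filter (I × ℝ × ℝ × ℝ)) (V W : I × ℝ × ℝ × ℝ → ℝ) (f : I → F3) :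
    Prop where
  base : LamBigO l V f
  grad (k : Fin 3) : LamBigO l W (fun i => pdi k (f i))

namespace GradBigO

lemma add (hf : GradBigO l V W f) (hg : GradBigO l V W g) :
    GradBigO l V W (fun i => f i + g i) where
  base := hf.base.add hg.base
  grad k := by
    simpa only [pdi_eq_LamF, LamF_add (hf.base.smooth _) (hg.base.smooth _)] using
      (hf.grad k).add (hg.grad k)

lemma const_smul (c : ℝ) (hf : GradBigO l V W f) : GradBigO l V W (fun i => c • f i) where
  base := hf.base.const_smul c
  grad k := by
    simpa only [pdi_eq_LamF, LamF_const_smul c (hf.base.smooth _)] using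
      (hf.grad k).const_smul c

lemma mul (hV : V =O[l] (1 : I × ℝ × ℝ × ℝ → ℝ)) (hf : GradBigO l V W f) (hg : GradBigO l V W g) :
    GradBigO l V W (fun i => f i * g i) where
  base := by simpa using hf.base.mul (hg.base.trans hV)
  grad k := by
    have hgf : LamBigO l W (fun i => pdi k (f i) * g i) := by
      simpa using (hf.grad k).mul (hg.base.trans hV)
    have hfg : LamBigO l W (fun i => f i * pdi k (g i)) := by
      simpa using (hf.base.trans hV).mul (hg.grad k)
    simpa only [pdi_eq_LamF, LamF_mul (hf.base.smooth _) (hg.base.smooth _)] using hgf.add hfg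

lemma postcomp {G : ℝ → ℝ} (hG : ContDiff ℝ ∞ G) (hG0 : G 0 = 0)
    (hV : V =O[l] (1 : I × ℝ × ℝ × ℝ → ℝ)) (hf : GradBigO l V W f) :
    GradBigO l V W (fun i => postcomp G (f i)) where
  base := hf.base.postcomp hG hG0 hV
  grad k := by
    simpa only [pdi_eq_LamF, LamF_postcomp hG (hf.base.smooth _)] using
      (hf.base.trans hV).postcomp_mul (contDiff_infty_iff_deriv.1 hG).2 (hf.grad k)

lemma isBigO_pdi_LIter (hf : GradBigO l V W f) (k : Fin 3) (α : List (Fin 7)) :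
    ↿(fun i => pdi k (LIter α (f i))) =O[l] W :=
  LamBigO.isBigO_pdi_LIter hf.base.smooth hf.grad k α

end GradBigO

end LamBigO

/-! ### The weights `σ₋^{-m} σ₊^{-1/2}` -/

section Weights

variable {t x y : ℝ}

lemma rad_nonneg (x y : ℝ) : 0 ≤ rad x y := Real.sqrt_nonneg _

lemma one_le_sm (t x y : ℝ) : 1 ≤ sm t x y := le_add_of_nonneg_right (abs_nonneg _)

lemma one_add_le_sp (t x y : ℝ) : 1 + t ≤ sp t x y := le_add_of_nonneg_right (rad_nonneg x y)

/-- The weight `σ₋^{-m} σ₊^{-1/2}`. -/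
def decayWeight (m : ℕ) : F3 := fun t x y => (sm t x y ^ m)⁻¹ * sp t x y ^ (-(1 / 2 : ℝ))

lemma decayWeight_nonneg (m : ℕ) (ht : 0 ≤ t) (x y : ℝ) : 0 ≤ decayWeight m t x y := by
  have hsm : 0 ≤ sm t x y := zero_le_one.trans (one_le_sm t x y)
  have hsp : 0 ≤ sp t x y := by linarith [one_add_le_sp t x y]
  unfold decayWeight
  positivity

lemma decayWeight_le_one (m : ℕ) (ht : 0 ≤ t) (x y : ℝ) : decayWeight m t x y ≤ 1 := by
  have hsp : 1 ≤ sp t x y := by linarith [one_add_le_sp t x y]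
  exact mul_le_one₀ (inv_le_one_of_one_le₀ (one_le_pow₀ (one_le_sm t x y)))
    (by positivity) (Real.rpow_le_one_of_one_le_of_nonpos hsp (by norm_num))

lemma exists_one_add_le_mul_sm {l : ℝ} (hl : l < 1) (M : ℝ) :
    ∃ D > 0, ∀ t x y, rad x y ≤ l * t + M → 1 + t ≤ D * sm t x y := by
  have hl' : 0 < 1 - l := by linarith
  refine ⟨1 + (1 + |M|) / (1 - l), by positivity, fun t x y hr => ?_⟩
  have hsm := one_le_sm t x y
  have distance_to_cone : (1 - l) * t + 1 - |M| ≤ sm t x y := by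
    unfold sm
    linarith [le_abs_self (t - rad x y), le_abs_self M]
  have ht' : t ≤ (1 + |M|) / (1 - l) * sm t x y := by
    rw [div_mul_eq_mul_div, le_div_iff₀ hl']
    nlinarith [abs_nonneg M]
  linarith

lemma exists_decayWeight_le_rpow (m : ℕ) {l : ℝ} (hl : l < 1) (M : ℝ) :
    ∃ C > 0, ∀ t x y, 0 ≤ t → rad x y ≤ l * t + M →
      decayWeight m t x y ≤ C * (1 + t) ^ (-(m + 1 / 2 : ℝ)) := by
  obtain ⟨D, hD, hsm⟩ := exists_one_add_le_mul_sm hl M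
  refine ⟨D ^ m, by positivity, fun t x y ht hr => ?_⟩
  have ht' : 0 < 1 + t := by linarith
  have inv_sm_le : (sm t x y ^ m)⁻¹ ≤ D ^ m * ((1 + t) ^ m)⁻¹ := by
    have := one_le_sm t x y
    rw [← div_eq_mul_inv, inv_le_iff_one_le_mul₀ (by positivity), div_mul_eq_mul_div,
      one_le_div (by positivity), ← mul_pow]
    exact pow_le_pow_left₀ ht'.le (hsm t x y hr) m
  have sp_le : sp t x y ^ (-(1 / 2 : ℝ)) ≤ (1 + t) ^ (-(1 / 2 : ℝ)) :=
    Real.rpow_le_rpow_of_nonpos ht' (one_add_le_sp t x y) (by norm_num)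
  calc decayWeight m t x y
      ≤ D ^ m * ((1 + t) ^ m)⁻¹ * (1 + t) ^ (-(1 / 2 : ℝ)) :=
        mul_le_mul inv_sm_le sp_le
          (Real.rpow_nonneg (ht'.le.trans (one_add_le_sp t x y)) _) (by positivity)
    _ = D ^ m * (1 + t) ^ (-(m + 1 / 2 : ℝ)) := by
        rw [neg_add, Real.rpow_add ht', Real.rpow_neg ht'.le m, Real.rpow_natCast, mul_assoc]

lemma exists_mul_rpow_le_linear {δ C₀ l : ℝ} (hδ : δ < 1) (hC₀ : 0 < C₀) (hl : 0 < l) :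
    ∃ M, ∀ t, 0 ≤ t → C₀ * (1 + t) ^ δ ≤ l * t + M := by
  have hδ' : 0 < 1 - δ := by linarith
  refine ⟨l + C₀ * (C₀ / l) ^ (1 / (1 - δ)), fun t ht => ?_⟩
  have ht' : 0 < 1 + t := by linarith
  rcases le_total (C₀ / l) ((1 + t) ^ (1 - δ)) with large | small
  · have hM : 0 ≤ C₀ * (C₀ / l) ^ (1 / (1 - δ)) := by positivity
    calc C₀ * (1 + t) ^ δ ≤ (1 + t) ^ (1 - δ) * l * (1 + t) ^ δ := by
          gcongr
          exact (div_le_iff₀ hl).1 large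
      _ = l * ((1 + t) ^ (1 - δ) * (1 + t) ^ δ) := by ring
      _ = l * (1 + t) := by rw [← Real.rpow_add ht', sub_add_cancel, Real.rpow_one]
      _ ≤ l * t + (l + C₀ * (C₀ / l) ^ (1 / (1 - δ))) := by linarith
  · have h1 : (1 + t) ^ δ ≤ 1 + t := by
      simpa using Real.rpow_le_rpow_of_exponent_le (by linarith : 1 ≤ 1 + t) hδ.le
    have h2 : 1 + t ≤ (C₀ / l) ^ (1 / (1 - δ)) := by
      rw [one_div]
      exact (Real.le_rpow_inv_iff_of_pos ht'.le (by positivity) hδ').2 small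
    have h3 := mul_le_mul_of_nonneg_left (h1.trans h2) hC₀.le
    have h4 : 0 ≤ l * t := by positivity
    linarith

end Weights

/-! ### Parity in the space variables -/

section Parity

variable {f : F3} {s : ℝ}

/-- `f(t, -x) = s f(t, x)`: even for `s = 1`, odd for `s = -1`. -/
def HasParity (s : ℝ) (f : F3) : Prop := ∀ t x y, f t (-x) (-y) = s * f t x y

lemma HasParity.partial_t (hf : HasParity s f) : HasParity s (pt f) := fun t x y => by
  simp only [pt, hf _ x y, deriv_const_mul_field]

lemma HasParity.partial_x (hf : HasParity s f) : HasParity (-s) (px f) := fun t x y => by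
  have h : deriv (fun u => f t (-u) (-y)) x = s * px f t x y := by
    simp only [hf t _ y, deriv_const_mul_field, px]
  rw [deriv_comp_neg fun u => f t u (-y)] at h
  exact (neg_eq_iff_eq_neg.1 h).trans (neg_mul _ _).symm

lemma HasParity.partial_y (hf : HasParity s f) : HasParity (-s) (py f) := fun t x y => by
  have h : deriv (fun u => f t (-x) (-u)) y = s * py f t x y := by
    simp only [hf t x, deriv_const_mul_field, py]
  rw [deriv_comp_neg (f t (-x))] at h
  exact (neg_eq_iff_eq_neg.1 h).trans (neg_mul _ _).symm

lemma HasParity.iterate_Xf (hf : HasParity s f) (k : ℕ) : HasParity s (Xf^[k] f) := by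
  induction k with
  | zero => exact hf
  | succ k ih =>
    intro t x y
    rw [Function.iterate_succ_apply', Xf, Xf, ih.partial_t, ih.partial_x, ih.partial_y]
    ring

lemma RadialF.hasParity_one (hf : RadialF f) : HasParity 1 f := fun t x y => by
  rw [one_mul]
  exact hf _ _ _ _ _ (by simp [rad])

lemma HasParity.apply_zero (hf : HasParity (-1) f) (t : ℝ) : f t 0 0 = 0 := by
  have h := hf t 0 0
  rw [neg_zero] at h
  linarith

lemma rad_smul {c : ℝ} (hc : 0 ≤ c) (x y : ℝ) : rad (c * x) (c * y) = c * rad x y := by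
  unfold rad
  rw [show (c * x) ^ 2 + (c * y) ^ 2 = c ^ 2 * (x ^ 2 + y ^ 2) by ring,
    Real.sqrt_mul (sq_nonneg c), Real.sqrt_sq hc]

lemma hasDerivAt_along_ray (hf : Smooth3 f) (t x y c : ℝ) :
    HasDerivAt (fun c => f t (c * x) (c * y))
      (x * px f t (c * x) (c * y) + y * py f t (c * x) (c * y)) c := by
  have hray : HasDerivAt (fun c : ℝ => (t, c * x, c * y)) (0, x, y) c :=
    (hasDerivAt_const c t).prodMk ((hasDerivAt_mul_const x).prodMk (hasDerivAt_mul_const y))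
  have hf' := hf.differentiable (t, c * x, c * y)
  refine (hf'.hasFDerivAt.comp_hasDerivAt c hray).congr_deriv ?_
  rw [fderiv_uncurry_apply hf', zero_mul, zero_add]

lemma abs_sub_apply_zero_le (hf : Smooth3 f) {t x y B : ℝ}
    (hpx : ∀ u v, rad u v ≤ rad x y → |px f t u v| ≤ B)
    (hpy : ∀ u v, rad u v ≤ rad x y → |py f t u v| ≤ B) :
    |f t x y - f t 0 0| ≤ 2 * rad x y * B := by
  have hx : |x| ≤ rad x y := Real.abs_le_sqrt (by nlinarith [sq_nonneg y])
  have hy : |y| ≤ rad x y := Real.abs_le_sqrt (by nlinarith [sq_nonneg x])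
  have deriv_le : ∀ c ∈ Ico (0 : ℝ) 1,
      ‖x * px f t (c * x) (c * y) + y * py f t (c * x) (c * y)‖ ≤ 2 * rad x y * B := by
    intro c hc
    have hrad : rad (c * x) (c * y) ≤ rad x y := by
      rw [rad_smul hc.1]
      exact mul_le_of_le_one_left (rad_nonneg x y) hc.2.le
    calc ‖x * px f t (c * x) (c * y) + y * py f t (c * x) (c * y)‖
        ≤ |x| * |px f t (c * x) (c * y)| + |y| * |py f t (c * x) (c * y)| := by
          simpa only [Real.norm_eq_abs, abs_mul] using
            abs_add_le (x * px f t (c * x) (c * y)) (y * py f t (c * x) (c * y))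
      _ ≤ rad x y * B + rad x y * B := by
          gcongr
          exacts [rad_nonneg x y, hpx _ _ hrad, rad_nonneg x y, hpy _ _ hrad]
      _ = 2 * rad x y * B := by ring
  simpa using norm_image_sub_le_of_norm_deriv_le_segment_01'
    (fun c _ => (hasDerivAt_along_ray hf t x y c).hasDerivWithinAt) deriv_le

lemma iterate_Xf_eq_LIter (k : ℕ) (f : F3) : Xf^[k] f = LIter (List.replicate k 4) f := by
  induction k with
  | zero => rfl
  | succ k ih =>
    rw [Function.iterate_succ_apply', ih]
    rfl

end Parity

/-! ### Extending a smooth germ -/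

lemma exists_contDiff_eventuallyEq {E F : Type*} [NormedAddCommGroup E] [NormedSpace ℝ E]
    [HasContDiffBump E] [NormedAddCommGroup F] [NormedSpace ℝ F] {n : ℕ∞} {g : E → F} {s : Set E}
    {c : E} (hs : IsOpen s) (hc : c ∈ s) (hg : ContDiffOn ℝ n g s) :
    ∃ G : E → F, ContDiff ℝ n G ∧ G =ᶠ[𝓝 c] g := by
  obtain ⟨d, hd, hball⟩ := Metric.nhds_basis_closedBall.mem_iff.1 (hs.mem_nhds hc)
  let χ : ContDiffBump c := ⟨d / 2, d, half_pos hd, half_lt_self hd⟩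
  have hχs : tsupport χ ⊆ s := χ.tsupport_eq.trans_subset hball
  have smooth_on_s : ContDiffOn ℝ n (fun w => χ w • g w) s := χ.contDiff.contDiffOn.smul hg
  have zero_off_tsupport : ContDiffOn ℝ n (fun w => χ w • g w) (tsupport χ)ᶜ :=
    (contDiffOn_const (c := (0 : F))).congr fun w hw => by
      rw [image_eq_zero_of_notMem_tsupport hw, zero_smul]
  refine ⟨fun w => χ w • g w, contDiff_of_contDiffOn_union_of_isOpen smooth_on_s
    zero_off_tsupport ?_ hs (isClosed_tsupport χ).isOpen_compl, ?_⟩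
  · rwa [union_comm, ← compl_subset_iff_union, compl_compl]
  · filter_upwards [χ.eventuallyEq_one] with w hw
    rw [hw, Pi.one_apply, one_smul]

lemma exists_contDiff_eventuallyEq_density {ρ : ℝ} (hρ : 0 < ρ) :
    ∃ G : ℝ → ℝ, ContDiff ℝ ∞ G ∧ G 0 = 0 ∧ ∀ᶠ w in 𝓝 0, G w = √(ρ ^ 2 / (1 + w)) - ρ := by
  have smooth_density : ContDiffOn ℝ ∞ (fun w => √(ρ ^ 2 / (1 + w)) - ρ) (Ioi (-1)) := by
    have hpos : ∀ w ∈ Ioi (-1 : ℝ), 0 < 1 + w := fun w hw => by linarith [mem_Ioi.1 hw]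
    refine ((contDiffOn_const.div (contDiffOn_const.add contDiffOn_id) fun w hw =>
      (hpos w hw).ne').sqrt fun w hw => ?_).sub contDiffOn_const
    exact (div_pos (pow_pos hρ 2) (hpos w hw)).ne'
  obtain ⟨G, hG, hGρ⟩ := exists_contDiff_eventuallyEq isOpen_Ioi (c := 0) (by simp) smooth_density
  refine ⟨G, hG, ?_, hGρ⟩
  rw [hGρ.self_of_nhds]
  simp [Real.sqrt_sq hρ.le]

/-! ### Potentials with decay and their approximate density -/

/-- A parameter `ε` with a smooth potential `φ` satisfying
`|Λ^α ∂^β φ| ≤ C_{αβ} ε σ₋^{-|β|} σ₊^{-1/2}` for `t ≥ 0`. The pairs form the parameter type over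
which all bounds are uniform. -/
structure DecayingPotential (Cc : ℕ → ℕ → ℝ) where
  eps : ℝ
  φ : F3
  eps_nonneg : 0 ≤ eps
  smooth : Smooth3 φ
  abs_LIter_PIter_le (α : List (Fin 7)) (β : List (Fin 3)) (t x y : ℝ) : 0 ≤ t →
    |LIter α (PIter β φ) t x y| ≤
      Cc α.length β.length * (eps * decayWeight β.length t x y)

section Potential

variable {Cc : ℕ → ℕ → ℝ} {ε₀ : ℝ}

/-- The principal filter of potentials of size `ε < ε₀` and points with `t ≥ 0`. -/
def smallData (Cc : ℕ → ℕ → ℝ) (ε₀ : ℝ) : Filter (DecayingPotential Cc × ℝ × ℝ × ℝ) :=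
  𝓟 {q | q.1.eps < ε₀ ∧ 0 ≤ q.2.1}

/-- The weight `ε σ₋^{-m} σ₊^{-1/2}` as a function of the potential and the point. -/
def potentialWeight (m : ℕ) (q : DecayingPotential Cc × ℝ × ℝ × ℝ) : ℝ :=
  q.1.eps * ↿(decayWeight m) q.2

lemma potentialWeight_isBigO_eps (m : ℕ) :
    potentialWeight (Cc := Cc) m =O[smallData Cc ε₀] fun q => q.1.eps := by
  refine .of_bound 1 (eventually_principal.2 fun ⟨P, t, x, y⟩ ⟨_, ht⟩ => ?_)
  have hw := decayWeight_nonneg m ht x y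
  rw [one_mul, potentialWeight, norm_mul]
  refine mul_le_of_le_one_right (norm_nonneg _) ?_
  exact (Real.norm_of_nonneg hw).trans_le (decayWeight_le_one m ht x y)

lemma eps_isBigO_one :
    (fun q => q.1.eps) =O[smallData Cc ε₀] (1 : DecayingPotential Cc × ℝ × ℝ × ℝ → ℝ) := by
  refine .of_bound ε₀ (eventually_principal.2 fun q hq => ?_)
  simpa [abs_of_nonneg q.1.eps_nonneg] using hq.1.le

lemma potentialWeight_isBigO_one (m : ℕ) :
    potentialWeight m =O[smallData Cc ε₀] (1 : DecayingPotential Cc × ℝ × ℝ × ℝ → ℝ) :=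
  (potentialWeight_isBigO_eps m).trans eps_isBigO_one

lemma exists_norm_le_of_isBigO_potentialWeight {E : Type*} [SeminormedAddCommGroup E] {m : ℕ}
    {F : DecayingPotential Cc × ℝ × ℝ × ℝ → E} (hF : F =O[smallData Cc ε₀] potentialWeight m) :
    ∃ C > 0, ∀ P, P.eps < ε₀ → ∀ t x y, 0 ≤ t →
      ‖F (P, t, x, y)‖ ≤ C * (P.eps * decayWeight m t x y) := by
  obtain ⟨C, hC, hFC⟩ := hF.exists_pos
  refine ⟨C, hC, fun P hP t x y ht => ?_⟩
  have hw : 0 ≤ potentialWeight m (P, t, x, y) :=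
    mul_nonneg P.eps_nonneg (decayWeight_nonneg m ht x y)
  have h := isBigOWith_principal.1 hFC (P, t, x, y) ⟨hP, ht⟩
  rwa [Real.norm_of_nonneg hw] at h

lemma exists_abs_LIter_le {f : DecayingPotential Cc → F3} {m : ℕ}
    (hf : LamBigO (smallData Cc ε₀) (potentialWeight m) f) (α : List (Fin 7)) :
    ∃ C > 0, ∀ P, P.eps < ε₀ → ∀ t x y, 0 ≤ t →
      |LIter α (f P) t x y| ≤ C * (P.eps * decayWeight m t x y) :=
  exists_norm_le_of_isBigO_potentialWeight (hf.isBigO α)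

lemma exists_abs_pdi_LIter_le {V : DecayingPotential Cc × ℝ × ℝ × ℝ → ℝ}
    {f : DecayingPotential Cc → F3} {m : ℕ}
    (hf : GradBigO (smallData Cc ε₀) V (potentialWeight m) f) (α : List (Fin 7))
    {l : ℝ} (hl : l < 1) (M : ℝ) :
    ∃ C > 0, ∀ P, P.eps < ε₀ → ∀ k t x y, 0 ≤ t → rad x y ≤ l * t + M →
      |pdi k (LIter α (f P)) t x y| ≤ C * P.eps * (1 + t) ^ (-(m + 1 / 2 : ℝ)) := by
  obtain ⟨C, hC, hfC⟩ := exists_norm_le_of_isBigO_potentialWeight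
    (isBigO_pi.2 fun k => hf.isBigO_pdi_LIter k α)
  obtain ⟨D, hD, hcone⟩ := exists_decayWeight_le_rpow m hl M
  refine ⟨C * D, by positivity, fun P hP k t x y ht hr => ?_⟩
  have heps := P.eps_nonneg
  calc |pdi k (LIter α (f P)) t x y| ≤ C * (P.eps * decayWeight m t x y) :=
        (norm_le_pi_norm (fun k => pdi k (LIter α (f P)) t x y) k).trans (hfC P hP t x y ht)
    _ ≤ C * (P.eps * (D * (1 + t) ^ (-(m + 1 / 2 : ℝ)))) := by
        gcongr
        exact hcone t x y ht hr
    _ = C * D * P.eps * (1 + t) ^ (-(m + 1 / 2 : ℝ)) := by ring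

/-- An odd function vanishes on the axis `x = 0`, so integrating the gradient bound along rays
gains the factor `|x| ≤ C₀⟨t⟩^δ`. -/
lemma exists_abs_iterate_Xf_le {V : DecayingPotential Cc × ℝ × ℝ × ℝ → ℝ}
    {f : DecayingPotential Cc → F3} {m : ℕ}
    (hf : GradBigO (smallData Cc ε₀) V (potentialWeight m) f) (k : ℕ)
    {δ C₀ : ℝ} (hδ : δ < 1) (hC₀ : 0 < C₀) :
    ∃ C > 0, ∀ P, P.eps < ε₀ → HasParity (-1) (f P) →
      ∀ t x y, 0 ≤ t → rad x y ≤ C₀ * (1 + t) ^ δ →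
        |Xf^[k] (f P) t x y| ≤ C * P.eps * (1 + t) ^ (-(m + 1 / 2 : ℝ) + δ) := by
  obtain ⟨M, hM⟩ := exists_mul_rpow_le_linear hδ hC₀ one_half_pos
  obtain ⟨C, hC, hfC⟩ := exists_abs_pdi_LIter_le hf (List.replicate k 4) one_half_lt_one M
  refine ⟨2 * C₀ * C, by positivity, fun P hP hodd t x y ht hr => ?_⟩
  have heps := P.eps_nonneg
  have ht' : 0 < 1 + t := by linarith
  have hgrad (j : Fin 3) (u v : ℝ) (huv : rad u v ≤ rad x y) :
      |pdi j (Xf^[k] (f P)) t u v| ≤ C * P.eps * (1 + t) ^ (-(m + 1 / 2 : ℝ)) := by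
    rw [iterate_Xf_eq_LIter]
    exact hfC P hP j t u v ht ((huv.trans hr).trans (hM t ht))
  have hsmooth : Smooth3 (Xf^[k] (f P)) := by
    rw [iterate_Xf_eq_LIter]
    exact (hf.base.smooth P).lIter _
  calc |Xf^[k] (f P) t x y| = |Xf^[k] (f P) t x y - Xf^[k] (f P) t 0 0| := by
        rw [(hodd.iterate_Xf k).apply_zero, sub_zero]
    _ ≤ 2 * rad x y * (C * P.eps * (1 + t) ^ (-(m + 1 / 2 : ℝ))) :=
        abs_sub_apply_zero_le hsmooth (hgrad 1) (hgrad 2)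
    _ ≤ 2 * (C₀ * (1 + t) ^ δ) * (C * P.eps * (1 + t) ^ (-(m + 1 / 2 : ℝ))) := by gcongr
    _ = 2 * C₀ * C * P.eps * (1 + t) ^ (-(m + 1 / 2 : ℝ) + δ) := by
        rw [Real.rpow_add ht']
        ring

lemma lamBigO_PIter (β : List (Fin 3)) :
    LamBigO (smallData Cc ε₀) (potentialWeight β.length) (fun P => PIter β P.φ) where
  smooth P := by
    induction β with
    | nil => exact P.smooth
    | cons k _ ih => exact ih.pdi k
  isBigO α := by
    refine .of_bound |Cc α.length β.length|
      (eventually_principal.2 fun ⟨P, t, x, y⟩ ⟨_, ht⟩ => ?_)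
    refine (P.abs_LIter_PIter_le α β t x y ht).trans ((le_abs_self _).trans_eq ?_)
    rw [abs_mul]
    rfl

lemma gradBigO_pdi (k : Fin 3) :
    GradBigO (smallData Cc ε₀) (potentialWeight 1) (potentialWeight 2) (fun P => pdi k P.φ) where
  base := lamBigO_PIter [k]
  grad j := lamBigO_PIter [j, k]

/-- The quantity `2∂_tφ + |∇φ|²`, of which the density is a function. -/
def bernoulliTerm (φ : F3) : F3 :=
  (2 : ℝ) • pdi 0 φ + pdi 1 φ * pdi 1 φ + pdi 2 φ * pdi 2 φ

lemma rhoA_eq_sqrt_bernoulliTerm (ρ : ℝ) (φ : F3) (t x y : ℝ) :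
    rhoA ρ φ t x y = √(ρ ^ 2 / (1 + bernoulliTerm φ t x y)) := by
  simp [rhoA, bernoulliTerm, pdi, sq, add_assoc]

lemma gradBigO_bernoulliTerm :
    GradBigO (smallData Cc ε₀) (potentialWeight 1) (potentialWeight 2)
      (fun P => bernoulliTerm P.φ) :=
  have one := potentialWeight_isBigO_one 1
  (((gradBigO_pdi 0).const_smul 2).add ((gradBigO_pdi 1).mul one (gradBigO_pdi 1))).add
    ((gradBigO_pdi 2).mul one (gradBigO_pdi 2))

lemma exists_forall_bernoulliTerm_of_eventually {p : ℝ → Prop} (hp : ∀ᶠ w in 𝓝 0, p w) :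
    ∃ ε₀ > 0, ∀ P : DecayingPotential Cc, P.eps < ε₀ → ∀ t x y, 0 ≤ t →
      p (bernoulliTerm P.φ t x y) := by
  obtain ⟨r, hr, hball⟩ := Metric.eventually_nhds_iff.1 hp
  obtain ⟨C, hC, hbound⟩ := exists_abs_LIter_le
    (gradBigO_bernoulliTerm (Cc := Cc) (ε₀ := 1)).base []
  refine ⟨min 1 (r / C), by positivity, fun P hP t x y ht => hball ?_⟩
  obtain ⟨hP1, hPr⟩ := lt_min_iff.1 hP
  calc dist (bernoulliTerm P.φ t x y) 0 = |bernoulliTerm P.φ t x y| := by simp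
    _ ≤ C * (P.eps * decayWeight 1 t x y) := hbound P hP1 t x y ht
    _ ≤ C * P.eps := by
        gcongr
        exact mul_le_of_le_one_right P.eps_nonneg (decayWeight_le_one 1 ht x y)
    _ < r := by rwa [mul_comm, ← lt_div_iff₀ hC]

/-- The deviation `ρ_a - ρ̄` of the approximate density from the background. -/
def densityDeviation (ρ : ℝ) (φ : F3) : F3 := fun t x y => rhoA ρ φ t x y - ρ

/-- `densityDeviation` itself need not be smooth where the radicand leaves `(0, ∞)`, hence the
replacement by a globally smooth function with the same germs in `t ≥ 0`. -/
lemma exists_gradBigO_eventuallyEq_densityDeviation {ρ : ℝ} (hρ : 0 < ρ) (Cc : ℕ → ℕ → ℝ) :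
    ∃ ε₀ > 0, ∃ f : DecayingPotential Cc → F3,
      GradBigO (smallData Cc ε₀) (potentialWeight 1) (potentialWeight 2) f ∧
      ∀ P, P.eps < ε₀ → ∀ t x y, 0 ≤ t → ↿(densityDeviation ρ P.φ) =ᶠ[𝓝 (t, x, y)] ↿(f P) := by
  obtain ⟨G, hG, hG0, hGρ⟩ := exists_contDiff_eventuallyEq_density hρ
  obtain ⟨ε₀, hε₀, hsmall⟩ :=
    exists_forall_bernoulliTerm_of_eventually (Cc := Cc) (eventually_eventually_nhds.2 hGρ)
  refine ⟨ε₀, hε₀, fun P => postcomp G (bernoulliTerm P.φ),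
    gradBigO_bernoulliTerm.postcomp hG hG0 (potentialWeight_isBigO_one 1), ?_⟩
  intro P hP t x y ht
  have hcont : Continuous ↿(bernoulliTerm P.φ) :=
    ((gradBigO_bernoulliTerm (ε₀ := ε₀)).base.smooth P).differentiable.continuous
  filter_upwards [(hcont.tendsto (t, x, y)).eventually (hsmall P hP t x y ht)] with q hq
  exact (congrArg (· - ρ) (rhoA_eq_sqrt_bernoulliTerm ρ P.φ _ _ _)).trans hq.symm

lemma exists_forall_densityDeviation_le {ρ : ℝ} (hρ : 0 < ρ) (Cc : ℕ → ℕ → ℝ) :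
    ∃ ε₀ > 0,
      (∀ α, ∃ C > 0, ∀ P : DecayingPotential Cc, P.eps < ε₀ → ∀ t x y, 0 ≤ t →
        |LIter α (densityDeviation ρ P.φ) t x y| ≤ C * (P.eps * decayWeight 1 t x y)) ∧
      (∀ α, ∀ l < 1, ∀ M, ∃ C > 0, ∀ P : DecayingPotential Cc, P.eps < ε₀ →
        ∀ k t x y, 0 ≤ t → rad x y ≤ l * t + M →
          |pdi k (LIter α (densityDeviation ρ P.φ)) t x y| ≤
            C * P.eps * (1 + t) ^ (-((2 : ℕ) + 1 / 2 : ℝ))) := by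
  obtain ⟨ε₀, hε₀, f, hf, germ_eq⟩ := exists_gradBigO_eventuallyEq_densityDeviation hρ Cc
  have LIter_eq (α : List (Fin 7)) (P : DecayingPotential Cc) (hP : P.eps < ε₀) (t x y : ℝ)
      (ht : 0 ≤ t) : LIter α (densityDeviation ρ P.φ) t x y = LIter α (f P) t x y :=
    (eventuallyEq_uncurry_LIter (germ_eq P hP t x y ht) α).self_of_nhds
  refine ⟨ε₀, hε₀, fun α => ?_, fun α l hl M => ?_⟩
  · obtain ⟨C, hC, hfC⟩ := exists_abs_LIter_le hf.base α
    refine ⟨C, hC, fun P hP t x y ht => ?_⟩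
    rw [LIter_eq α P hP t x y ht]
    exact hfC P hP t x y ht
  · obtain ⟨C, hC, hfC⟩ := exists_abs_pdi_LIter_le hf α hl M
    refine ⟨C, hC, fun P hP k t x y ht hr => ?_⟩
    have pdi_eq : pdi k (LIter α (densityDeviation ρ P.φ)) t x y = pdi k (LIter α (f P)) t x y := by
      rw [pdi_eq_LamF]
      exact LIter_eq (pdIdx k :: α) P hP t x y ht
    rw [pdi_eq]
    exact hfC P hP k t x y ht hr

end Potential

theorem approx_solution_decay_general {ρbar : ℝ} (hρbar : 0 < ρbar) (Cc : ℕ → ℕ → ℝ) :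
    ∃ ε₀ > 0,
      (∀ α : List (Fin 7), ∃ C > 0, ∀ P : DecayingPotential Cc, P.eps < ε₀ →
        ∀ t x y, 0 ≤ t →
          |LIter α (densityDeviation ρbar P.φ) t x y|
            + max |LIter α (px P.φ) t x y| |LIter α (py P.φ) t x y| ≤
          C * P.eps * (sm t x y)⁻¹ * sp t x y ^ (-(1 / 2 : ℝ))) ∧
      (∀ α : List (Fin 7), ∀ l < 1, ∀ M : ℝ, ∃ C > 0, ∀ P : DecayingPotential Cc, P.eps < ε₀ →
        ∀ (i : Fin 3) (t x y : ℝ), 0 ≤ t → rad x y ≤ l * t + M →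
          |pdi i (LIter α (densityDeviation ρbar P.φ)) t x y|
            + |pdi i (LIter α (px P.φ)) t x y| + |pdi i (LIter α (py P.φ)) t x y| ≤
          C * P.eps * (1 + t) ^ (-(5 / 2 : ℝ))) ∧
      (∀ k : ℕ, ∀ δ < 1, ∀ C₀ > 0, ∃ C > 0, ∀ P : DecayingPotential Cc, P.eps < ε₀ →
        HasParity 1 P.φ → ∀ t x y, 0 ≤ t → rad x y ≤ C₀ * (1 + t) ^ δ →
          max |Xf^[k] (px P.φ) t x y| |Xf^[k] (py P.φ) t x y| ≤
          C * P.eps * (1 + t) ^ (-(5 / 2 : ℝ) + δ)) := by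
  obtain ⟨ε₀, hε₀, hρ, hgradρ⟩ := exists_forall_densityDeviation_le hρbar Cc
  have hpdi (j : Fin 3) := gradBigO_pdi (Cc := Cc) (ε₀ := ε₀) j
  have exponent : -((2 : ℕ) + 1 / 2 : ℝ) = -(5 / 2) := by norm_num
  refine ⟨ε₀, hε₀, fun α => ?_, fun α l hl M => ?_, fun k δ hδ C₀ hC₀ => ?_⟩
  · obtain ⟨C, hC, hCρ⟩ := hρ α
    obtain ⟨Cx, hCx, hpx⟩ := exists_abs_LIter_le (hpdi 1).base α
    obtain ⟨Cy, hCy, hpy⟩ := exists_abs_LIter_le (hpdi 2).base α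
    refine ⟨C + (Cx + Cy), by positivity, fun P hP t x y ht => ?_⟩
    calc _ ≤ C * (P.eps * decayWeight 1 t x y)
          + (Cx * (P.eps * decayWeight 1 t x y) + Cy * (P.eps * decayWeight 1 t x y)) := by
          gcongr
          · exact hCρ P hP t x y ht
          · exact (max_le_add_of_nonneg (abs_nonneg _) (abs_nonneg _)).trans
              (add_le_add (hpx P hP t x y ht) (hpy P hP t x y ht))
      _ = _ := by
          rw [decayWeight, pow_one]
          ring
  · obtain ⟨C, hC, hCρ⟩ := hgradρ α l hl M
    obtain ⟨Cx, hCx, hpx⟩ := exists_abs_pdi_LIter_le (hpdi 1) α hl M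
    obtain ⟨Cy, hCy, hpy⟩ := exists_abs_pdi_LIter_le (hpdi 2) α hl M
    refine ⟨C + Cx + Cy, by positivity, fun P hP i t x y ht hr => ?_⟩
    have h := add_le_add_three (hCρ P hP i t x y ht hr) (hpx P hP i t x y ht hr)
      (hpy P hP i t x y ht hr)
    rw [exponent, ← add_mul, ← add_mul, ← add_mul, ← add_mul] at h
    exact h
  · obtain ⟨Cx, hCx, hpx⟩ := exists_abs_iterate_Xf_le (hpdi 1) k hδ hC₀
    obtain ⟨Cy, hCy, hpy⟩ := exists_abs_iterate_Xf_le (hpdi 2) k hδ hC₀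
    refine ⟨Cx + Cy, by positivity, fun P hP heven t x y ht hr => ?_⟩
    have h := add_le_add (hpx P hP heven.partial_x t x y ht hr)
      (hpy P hP heven.partial_y t x y ht hr)
    rw [exponent, ← add_mul, ← add_mul] at h
    exact (max_le_add_of_nonneg (abs_nonneg _) (abs_nonneg _)).trans h

/-- The potential of `HypPhiA`, without its symmetry and support conditions. -/
def HypPhiA.toDecayingPotential {M eps : ℝ} {Cc : ℕ → ℕ → ℝ} {φ : F3} (h : HypPhiA M eps Cc φ)
    (heps : 0 < eps) : DecayingPotential Cc where
  eps := eps
  φ := φ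
  eps_nonneg := heps.le
  smooth := h.1
  abs_LIter_PIter_le α β t x y ht := (h.2.2.2 α β t x y ht).trans_eq <| by
    rw [decayWeight]
    ring

/-- **Decay estimates for the approximate solution** (Lemma 2.1):
`(1)` `(|Λ^α(ρ_a−ρ̄)| + |Λ^α u_a|) ≤ C_α ε σ₋^{−1}σ₊^{−1/2}`;
`(2)` `|∂Λ^α(ρ_a−ρ̄)| + |∂Λ^α u_a| ≤ C_α ε ⟨t⟩^{−5/2}` for `|x| ≤ lt+M`, `0 ≤ l < 1`;
`(3)` `|X^k u_a| ≤ C_{kδ} ε ⟨t⟩^{−5/2+δ}` for `|x| ≤ C⟨t⟩^δ`, `0 ≤ δ < 1`. -/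
theorem approx_solution_decay (ρbar M : ℝ) (hρbar : 0 < ρbar) (hM : 0 < M)
    (Cc : ℕ → ℕ → ℝ) :
    ∃ ε₀ > 0,
      (∀ α : List (Fin 7), ∃ C > 0, ∀ eps : ℝ, ∀ φa : F3,
        0 < eps → eps < ε₀ → HypPhiA M eps Cc φa →
        ∀ t x y, 0 ≤ t →
          |LIter α (fun s u v => rhoA ρbar φa s u v - ρbar) t x y|
            + max (|LIter α (px φa) t x y|) (|LIter α (py φa) t x y|) ≤
          C * eps * (sm t x y)⁻¹ * (sp t x y) ^ (-(1/2 : ℝ))) ∧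
      (∀ α : List (Fin 7), ∀ l : ℝ, 0 ≤ l → l < 1 → ∃ C > 0, ∀ eps : ℝ, ∀ φa : F3,
        0 < eps → eps < ε₀ → HypPhiA M eps Cc φa →
        ∀ i : Fin 3, ∀ t x y, 0 ≤ t → rad x y ≤ l * t + M →
          |pdi i (LIter α (fun s u v => rhoA ρbar φa s u v - ρbar)) t x y|
            + |pdi i (LIter α (px φa)) t x y| + |pdi i (LIter α (py φa)) t x y| ≤
          C * eps * (1 + t) ^ (-(5/2 : ℝ))) ∧
      (∀ k : ℕ, ∀ δ C0 : ℝ, 0 ≤ δ → δ < 1 → 0 < C0 → ∃ C > 0, ∀ eps : ℝ, ∀ φa : F3,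
        0 < eps → eps < ε₀ → HypPhiA M eps Cc φa →
        ∀ t x y, 0 ≤ t → rad x y ≤ C0 * (1 + t) ^ δ →
          max (|(Xf^[k]) (px φa) t x y|) (|(Xf^[k]) (py φa) t x y|) ≤
          C * eps * (1 + t) ^ (-(5/2 : ℝ) + δ)) := by
  obtain ⟨ε₀, hε₀, value, gradient, iterate⟩ := approx_solution_decay_general hρbar Cc
  exact ⟨ε₀, hε₀,
    fun α => (value α).imp fun _ h =>
      ⟨h.1, fun _ _ heps hlt hφ => h.2 (hφ.toDecayingPotential heps) hlt⟩,
    fun α l _ hl => (gradient α l hl M).imp fun _ h =>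
      ⟨h.1, fun _ _ heps hlt hφ => h.2 (hφ.toDecayingPotential heps) hlt⟩,
    fun k δ C0 _ hδ hC0 => (iterate k δ hδ C0 hC0).imp fun _ h =>
      ⟨h.1, fun _ _ heps hlt hφ => h.2 (hφ.toDecayingPotential heps) hlt hφ.2.1.hasParity_one⟩⟩

end
end

section
/- There exists a constant C > 0 such that for every t ≥ 0 and every vector field v = (v₁,v₂) ∈ C₀^∞(ℝ²;ℝ²) satisfying ∇·v^⊥ = 0, where v^⊥ = (−v₂, v₁) (equivalently ∂₁v₂ − ∂₂v₁ = 0), one has ‖σ₋(t,·)∇v‖_{L²(ℝ²)} ≤ C(‖σ₋(t,·)∇·v‖_{L²(ℝ²)} + ‖v‖_{L²(ℝ²)}), where ∇v denotes the full Jacobian matrix (∂_i v_j)_{i,j=1,2} and C is independent of t and v. -/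
noncomputable section

open Real MeasureTheory Set

/-- The `L²(ℝ²)` norm. -/
def L2n (g : ℝ → ℝ → ℝ) : ℝ := Real.sqrt (∫ q : ℝ × ℝ, (g q.1 q.2) ^ 2)

/-- The `L²` norm over a region `S ⊆ ℝ²`. -/
def L2nS (S : Set (ℝ × ℝ)) (g : ℝ → ℝ → ℝ) : ℝ := Real.sqrt (∫ q in S, (g q.1 q.2) ^ 2)

/-- Spatial derivative in the first variable for a function on `ℝ²`. -/
def q1 (g : ℝ → ℝ → ℝ) : ℝ → ℝ → ℝ := fun x y => deriv (fun s => g s y) x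
/-- Spatial derivative in the second variable for a function on `ℝ²`. -/
def q2 (g : ℝ → ℝ → ℝ) : ℝ → ℝ → ℝ := fun x y => deriv (fun s => g x s) y

/-!
For curl-free `v` one has `|∇v|² = (∇·v)² - 2 det ∇v`, and `det ∇v` is a null form: for any `f, g`,
`df ∧ dg = d(f dg)` integrates to zero when `f` has compact support. Taking `w v₁` and `v₂` as
`f` and `g` turns `∫ w det ∇v` into `-∫ v₁ dw ∧ dv₂`, which Young's inequality absorbs into
`½ ∫ w |∇v|²` at the cost of a multiple of `∫ v₁²` as soon as `|∇w|² ≤ K w`.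

The function `σ₋²` is not differentiable everywhere, so the weight is
`w = 1 + (t - ⟨x⟩)²` with `⟨x⟩ = √(1 + |x|²)`. It satisfies `|∇w|² ≤ 4 w` because `|∇⟨x⟩| ≤ 1`, and
it is comparable to `σ₋²` uniformly in `t` because `0 ≤ ⟨x⟩ - |x| ≤ 1`.
-/

lemma hasCompactSupport_sq {X : Type*} [TopologicalSpace X] {f : X → ℝ}
    (hf : HasCompactSupport f) : HasCompactSupport fun x => f x ^ 2 :=
  hf.comp_left (g := fun s : ℝ => s ^ 2) (zero_pow two_ne_zero)

lemma integrable_sq_of_hasCompactSupport {X : Type*} [TopologicalSpace X] [MeasurableSpace X]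
    [OpensMeasurableSpace X] {μ : Measure X} [IsFiniteMeasureOnCompacts μ] {f : X → ℝ}
    (hf : Continuous f) (hfc : HasCompactSupport f) : Integrable (fun x => f x ^ 2) μ :=
  (hf.pow 2).integrable_of_hasCompactSupport (hasCompactSupport_sq hfc)

section NullForm

variable {E : Type*} [NormedAddCommGroup E] [NormedSpace ℝ E]

/-- The null form `∂ₑf ∂ₑ'g - ∂ₑ'f ∂ₑg`, that is, the two-form `df ∧ dg` evaluated at `(e, e')`.
For the standard basis of the plane it is the Jacobian determinant of `(f, g)`. -/
def nullForm (e e' : E) (f g : E → ℝ) (x : E) : ℝ :=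
  fderiv ℝ f x e * fderiv ℝ g x e' - fderiv ℝ f x e' * fderiv ℝ g x e

/-- The sum `(∂ₑf)² + (∂ₑ'f)²` of squared directional derivatives, which is `|∇f|²` for the standard
basis of the plane. -/
def gradSq (e e' : E) (f : E → ℝ) (x : E) : ℝ :=
  fderiv ℝ f x e ^ 2 + fderiv ℝ f x e' ^ 2

variable {e e' : E} {f g w : E → ℝ} {x : E}

lemma gradSq_nonneg (e e' : E) (f : E → ℝ) (x : E) : 0 ≤ gradSq e e' f x := by
  unfold gradSq
  positivity

lemma continuous_fderiv_const_apply (hf : ContDiff ℝ 1 f) (e : E) :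
    Continuous fun x => fderiv ℝ f x e :=
  (hf.continuous_fderiv one_ne_zero).clm_apply continuous_const

lemma continuous_gradSq (hf : ContDiff ℝ 1 f) : Continuous (gradSq e e' f) :=
  ((continuous_fderiv_const_apply hf e).pow 2).add ((continuous_fderiv_const_apply hf e').pow 2)

lemma hasCompactSupport_gradSq (hf : HasCompactSupport f) : HasCompactSupport (gradSq e e' f) :=
  (hasCompactSupport_sq (hf.fderiv_apply (𝕜 := ℝ) e)).add
    (hasCompactSupport_sq (hf.fderiv_apply (𝕜 := ℝ) e'))

lemma continuous_nullForm (hf : ContDiff ℝ 1 f) (hg : ContDiff ℝ 1 g) :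
    Continuous (nullForm e e' f g) :=
  ((continuous_fderiv_const_apply hf e).mul (continuous_fderiv_const_apply hg e')).sub
    ((continuous_fderiv_const_apply hf e').mul (continuous_fderiv_const_apply hg e))

lemma hasCompactSupport_nullForm (hf : HasCompactSupport f) :
    HasCompactSupport (nullForm e e' f g) :=
  (hf.fderiv_apply (𝕜 := ℝ) e).mul_right.sub (hf.fderiv_apply (𝕜 := ℝ) e').mul_right

lemma nullForm_mul_left (hw : DifferentiableAt ℝ w x) (hf : DifferentiableAt ℝ f x) :
    nullForm e e' (fun y => w y * f y) g x =
      w x * nullForm e e' f g x + f x * nullForm e e' w g x := by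
  simp only [nullForm, fderiv_fun_mul hw hf, add_apply, smul_apply, smul_eq_mul]
  ring

lemma sq_nullForm_le (e e' : E) (f g : E → ℝ) (x : E) :
    nullForm e e' f g x ^ 2 ≤ gradSq e e' f x * gradSq e e' g x := by
  unfold nullForm gradSq
  linarith [sq_nonneg (fderiv ℝ f x e * fderiv ℝ g x e + fderiv ℝ f x e' * fderiv ℝ g x e')]

lemma gradSq_add_gradSq_of_curl_eq_zero (hcurl : fderiv ℝ g x e = fderiv ℝ f x e') :
    gradSq e e' f x + gradSq e e' g x =
      (fderiv ℝ f x e + fderiv ℝ g x e') ^ 2 - 2 * nullForm e e' f g x := by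
  simp only [gradSq, nullForm, hcurl]
  ring

lemma two_mul_mul_nullForm_le {K : ℝ} (hK : 0 < K) (hw : gradSq e e' w x ≤ K * w x) (u : ℝ) :
    2 * (u * nullForm e e' w g x) ≤
      1 / 2 * (w x * gradSq e e' g x) + 2 * K * u ^ 2 := by
  set N := nullForm e e' w g x
  have hN : N ^ 2 ≤ K * (w x * gradSq e e' g x) :=
    calc N ^ 2 ≤ gradSq e e' w x * gradSq e e' g x := sq_nullForm_le e e' w g x
      _ ≤ K * w x * gradSq e e' g x := mul_le_mul_of_nonneg_right hw (gradSq_nonneg e e' g x)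
      _ = K * (w x * gradSq e e' g x) := mul_assoc _ _ _
  refine le_of_mul_le_mul_left ?_ hK
  linarith [sq_nonneg (N - 2 * K * u)]

lemma gradSq_one_add_sub_sq_le {φ : E → ℝ} (hφ : DifferentiableAt ℝ φ x)
    (hgrad : gradSq e e' φ x ≤ 1) (t : ℝ) :
    gradSq e e' (fun y => 1 + (t - φ y) ^ 2) x ≤ 4 * (1 + (t - φ x) ^ 2) := by
  have hderiv (v : E) :
      fderiv ℝ (fun y => 1 + (t - φ y) ^ 2) x v = -2 * (t - φ x) * fderiv ℝ φ x v := by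
    rw [(((hφ.hasFDerivAt.const_sub t).pow 2).const_add 1).fderiv]
    simp
  calc gradSq e e' (fun y => 1 + (t - φ y) ^ 2) x
      = 4 * (t - φ x) ^ 2 * gradSq e e' φ x := by
        simp only [gradSq, hderiv]
        ring
    _ ≤ 4 * (t - φ x) ^ 2 * 1 := by gcongr
    _ ≤ 4 * (1 + (t - φ x) ^ 2) := by linarith

end NullForm

section WeightedIntegrals

variable {E : Type*} [NormedAddCommGroup E] [NormedSpace ℝ E] [MeasurableSpace E]
  [OpensMeasurableSpace E] {μ : Measure E} [IsFiniteMeasureOnCompacts μ] {f g w : E → ℝ}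

lemma integrable_fderiv_mul_fderiv (hf : ContDiff ℝ 1 f) (hg : ContDiff ℝ 1 g)
    (hfc : HasCompactSupport f) (e e' : E) :
    Integrable (fun x => fderiv ℝ f x e * fderiv ℝ g x e') μ :=
  ((continuous_fderiv_const_apply hf e).mul
    (continuous_fderiv_const_apply hg e')).integrable_of_hasCompactSupport
      (hfc.fderiv_apply (𝕜 := ℝ) e).mul_right

lemma integrable_mul_nullForm (hw : Continuous w) (hf : ContDiff ℝ 1 f) (hg : ContDiff ℝ 1 g)
    (hfc : HasCompactSupport f) (e e' : E) :
    Integrable (fun x => w x * nullForm e e' f g x) μ :=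
  (hw.mul (continuous_nullForm hf hg)).integrable_of_hasCompactSupport
    (hasCompactSupport_nullForm hfc).mul_left

lemma integrable_mul_nullForm_of_hasCompactSupport (hf : Continuous f)
    (hfc : HasCompactSupport f) (hw : ContDiff ℝ 1 w) (hg : ContDiff ℝ 1 g) (e e' : E) :
    Integrable (fun x => f x * nullForm e e' w g x) μ :=
  (hf.mul (continuous_nullForm hw hg)).integrable_of_hasCompactSupport hfc.mul_right

lemma integrable_mul_gradSq_add_gradSq (hw : Continuous w) (hf : ContDiff ℝ 1 f)
    (hg : ContDiff ℝ 1 g) (hfc : HasCompactSupport f) (hgc : HasCompactSupport g) (e e' : E) :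
    Integrable (fun x => w x * (gradSq e e' f x + gradSq e e' g x)) μ :=
  (hw.mul ((continuous_gradSq hf).add (continuous_gradSq hg))).integrable_of_hasCompactSupport
    ((hasCompactSupport_gradSq hfc).add (hasCompactSupport_gradSq hgc)).mul_left

lemma integrable_mul_fderiv_add_fderiv_sq (hw : Continuous w) (hf : ContDiff ℝ 1 f)
    (hg : ContDiff ℝ 1 g) (hfc : HasCompactSupport f) (hgc : HasCompactSupport g) (e e' : E) :
    Integrable (fun x => w x * (fderiv ℝ f x e + fderiv ℝ g x e') ^ 2) μ :=
  (hw.mul (((continuous_fderiv_const_apply hf e).add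
    (continuous_fderiv_const_apply hg e')).pow 2)).integrable_of_hasCompactSupport
      (hasCompactSupport_sq ((hfc.fderiv_apply (𝕜 := ℝ) e).add
        (hgc.fderiv_apply (𝕜 := ℝ) e'))).mul_left

lemma two_mul_integral_mul_nullForm_le {e e' : E} {K : ℝ} (hK : 0 < K) (hw : ContDiff ℝ 1 w)
    (hwgrad : ∀ x, gradSq e e' w x ≤ K * w x) (hf : ContDiff ℝ 1 f) (hg : ContDiff ℝ 1 g)
    (hfc : HasCompactSupport f) (hgc : HasCompactSupport g) :
    2 * ∫ x, f x * nullForm e e' w g x ∂μ ≤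
      1 / 2 * ∫ x, w x * (gradSq e e' f x + gradSq e e' g x) ∂μ +
        2 * K * ∫ x, f x ^ 2 ∂μ := by
  have hwpos (x : E) : 0 ≤ w x :=
    nonneg_of_mul_nonneg_right ((gradSq_nonneg e e' w x).trans (hwgrad x)) hK
  have hpointwise (x : E) : 2 * (f x * nullForm e e' w g x) ≤
      1 / 2 * (w x * (gradSq e e' f x + gradSq e e' g x)) + 2 * K * f x ^ 2 := by
    linarith [two_mul_mul_nullForm_le (g := g) hK (hwgrad x) (f x),
      mul_nonneg (hwpos x) (gradSq_nonneg e e' f x)]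
  have henergy := integrable_mul_gradSq_add_gradSq (μ := μ) hw.continuous hf hg hfc hgc e e'
  have hmass := integrable_sq_of_hasCompactSupport (μ := μ) hf.continuous hfc
  rw [← integral_const_mul, ← integral_const_mul, ← integral_const_mul,
    ← integral_add (henergy.const_mul _) (hmass.const_mul _)]
  exact integral_mono
    ((integrable_mul_nullForm_of_hasCompactSupport hf.continuous hfc hw hg e e').const_mul 2)
    ((henergy.const_mul _).add (hmass.const_mul _)) hpointwise

end WeightedIntegrals

section IntegrationByParts

variable {E : Type*} [NormedAddCommGroup E] [NormedSpace ℝ E] [FiniteDimensional ℝ E]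
  [MeasurableSpace E] [BorelSpace E] {μ : Measure E} [μ.IsAddHaarMeasure] {f g w : E → ℝ}

lemma integral_fderiv_mul_fderiv (hf : ContDiff ℝ 1 f) (hg : ContDiff ℝ 2 g)
    (hfc : HasCompactSupport f) (e e' : E) :
    ∫ x, fderiv ℝ f x e * fderiv ℝ g x e' ∂μ =
      -∫ x, f x * fderiv ℝ (fderiv ℝ g) x e e' ∂μ := by
  have hg' : ContDiff ℝ 1 (fderiv ℝ g) := hg.fderiv_right (by norm_num)
  have hge' : ContDiff ℝ 1 (fun x => fderiv ℝ g x e') := hg'.clm_apply contDiff_const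
  have hsecond (x : E) :
      fderiv ℝ (fun y => fderiv ℝ g y e') x e = fderiv ℝ (fderiv ℝ g) x e e' := by
    rw [fderiv_clm_apply (hg'.differentiable one_ne_zero x) (differentiableAt_const e')]
    simp
  have hparts := integral_mul_fderiv_eq_neg_fderiv_mul_of_integrable
    (integrable_fderiv_mul_fderiv (μ := μ) hf (hg.of_le one_le_two) hfc e e')
    ((hf.continuous.mul (continuous_fderiv_const_apply hge' e)).integrable_of_hasCompactSupport
      hfc.mul_right)
    ((hf.continuous.mul hge'.continuous).integrable_of_hasCompactSupport hfc.mul_right)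
    (fun x _ => hf.differentiable one_ne_zero x)
    (fun x _ => hge'.differentiable one_ne_zero x)
  simp only [hsecond] at hparts
  rw [hparts, neg_neg]

theorem integral_nullForm_eq_zero (hf : ContDiff ℝ 1 f) (hg : ContDiff ℝ 2 g)
    (hfc : HasCompactSupport f) (e e' : E) : ∫ x, nullForm e e' f g x ∂μ = 0 := by
  have hg₁ : ContDiff ℝ 1 g := hg.of_le one_le_two
  have hsymm (x : E) : fderiv ℝ (fderiv ℝ g) x e e' = fderiv ℝ (fderiv ℝ g) x e' e :=
    (hg.contDiffAt.isSymmSndFDerivAt (by simp)).eq e e'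
  unfold nullForm
  rw [integral_sub (integrable_fderiv_mul_fderiv hf hg₁ hfc e e')
      (integrable_fderiv_mul_fderiv hf hg₁ hfc e' e),
    integral_fderiv_mul_fderiv hf hg hfc, integral_fderiv_mul_fderiv hf hg hfc]
  simp only [hsymm, sub_self]

lemma integral_mul_nullForm (hw : ContDiff ℝ 1 w) (hf : ContDiff ℝ 1 f) (hg : ContDiff ℝ 2 g)
    (hfc : HasCompactSupport f) (e e' : E) :
    ∫ x, w x * nullForm e e' f g x ∂μ = -∫ x, f x * nullForm e e' w g x ∂μ := by
  have hg₁ : ContDiff ℝ 1 g := hg.of_le one_le_two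
  have hzero := integral_nullForm_eq_zero (μ := μ) (hw.mul hf) hg hfc.mul_left e e'
  simp only [nullForm_mul_left (hw.differentiable one_ne_zero _)
    (hf.differentiable one_ne_zero _)] at hzero
  rw [integral_add (integrable_mul_nullForm hw.continuous hf hg₁ hfc e e')
    (integrable_mul_nullForm_of_hasCompactSupport hf.continuous hfc hw hg₁ e e')] at hzero
  exact eq_neg_of_add_eq_zero_left hzero

lemma integral_mul_gradSq_add_gradSq_eq {e e' : E} (hw : ContDiff ℝ 1 w) (hf : ContDiff ℝ 1 f)
    (hg : ContDiff ℝ 2 g) (hfc : HasCompactSupport f) (hgc : HasCompactSupport g)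
    (hcurl : ∀ x, fderiv ℝ g x e = fderiv ℝ f x e') :
    ∫ x, w x * (gradSq e e' f x + gradSq e e' g x) ∂μ =
      ∫ x, w x * (fderiv ℝ f x e + fderiv ℝ g x e') ^ 2 ∂μ +
        2 * ∫ x, f x * nullForm e e' w g x ∂μ := by
  have hg₁ : ContDiff ℝ 1 g := hg.of_le one_le_two
  calc ∫ x, w x * (gradSq e e' f x + gradSq e e' g x) ∂μ
      = ∫ x, (w x * (fderiv ℝ f x e + fderiv ℝ g x e') ^ 2 -
          2 * (w x * nullForm e e' f g x)) ∂μ := by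
        congr with x
        rw [gradSq_add_gradSq_of_curl_eq_zero (hcurl x)]
        ring
    _ = ∫ x, w x * (fderiv ℝ f x e + fderiv ℝ g x e') ^ 2 ∂μ -
          2 * ∫ x, w x * nullForm e e' f g x ∂μ := by
        rw [integral_sub (integrable_mul_fderiv_add_fderiv_sq hw.continuous hf hg₁ hfc hgc e e')
          ((integrable_mul_nullForm hw.continuous hf hg₁ hfc e e').const_mul 2),
          integral_const_mul]
    _ = _ := by
        rw [integral_mul_nullForm hw hf hg hfc]
        ring

theorem integral_mul_gradSq_add_gradSq_le {e e' : E} {K : ℝ} (hK : 0 < K) (hw : ContDiff ℝ 1 w)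
    (hwgrad : ∀ x, gradSq e e' w x ≤ K * w x) (hf : ContDiff ℝ 1 f) (hg : ContDiff ℝ 2 g)
    (hfc : HasCompactSupport f) (hgc : HasCompactSupport g)
    (hcurl : ∀ x, fderiv ℝ g x e = fderiv ℝ f x e') :
    ∫ x, w x * (gradSq e e' f x + gradSq e e' g x) ∂μ ≤
      2 * ∫ x, w x * (fderiv ℝ f x e + fderiv ℝ g x e') ^ 2 ∂μ + 4 * K * ∫ x, f x ^ 2 ∂μ := by
  linarith [integral_mul_gradSq_add_gradSq_eq (μ := μ) hw hf hg hfc hgc hcurl,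
    two_mul_integral_mul_nullForm_le (μ := μ) hK hw hwgrad hf (hg.of_le one_le_two) hfc hgc]

end IntegrationByParts

section SmoothWeight

/-- The Japanese bracket `⟨x⟩ = √(1 + |x|²)` for the Euclidean norm; the norm of `ℝ × ℝ` in Mathlib
is the maximum norm. -/
def japaneseBracket (q : ℝ × ℝ) : ℝ := √(1 + q.1 ^ 2 + q.2 ^ 2)

/-- The weight `1 + (t - ⟨x⟩)²`, a smooth substitute for `σ₋(t, x)²`. -/
def smoothWeight (t : ℝ) (q : ℝ × ℝ) : ℝ := 1 + (t - japaneseBracket q) ^ 2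

lemma contDiff_japaneseBracket {n : WithTop ℕ∞} : ContDiff ℝ n japaneseBracket :=
  ContDiff.sqrt (by fun_prop) fun q => by positivity

lemma contDiff_smoothWeight {n : WithTop ℕ∞} (t : ℝ) : ContDiff ℝ n (smoothWeight t) :=
  contDiff_const.add ((contDiff_const.sub contDiff_japaneseBracket).pow 2)

lemma fderiv_japaneseBracket (q v : ℝ × ℝ) :
    fderiv ℝ japaneseBracket q v = (q.1 * v.1 + q.2 * v.2) / japaneseBracket q := by
  have hne : 1 + q.1 ^ 2 + q.2 ^ 2 ≠ 0 := by positivity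
  have hderiv : HasFDerivAt japaneseBracket _ q :=
    ((((hasFDerivAt_fst (𝕜 := ℝ) (p := q)).pow 2).const_add 1).add
      ((hasFDerivAt_snd (𝕜 := ℝ) (p := q)).pow 2)).sqrt hne
  rw [hderiv.fderiv, japaneseBracket]
  simp only [Pi.add_apply, one_div, mul_inv_rev, Nat.add_one_sub_one, pow_one, nsmul_eq_mul,
    Nat.cast_ofNat, smul_add, add_apply, smul_apply, ContinuousLinearMap.coe_fst', smul_eq_mul,
    ContinuousLinearMap.coe_snd']
  field_simp

lemma gradSq_japaneseBracket_le_one (q : ℝ × ℝ) : gradSq (1, 0) (0, 1) japaneseBracket q ≤ 1 := by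
  have hsq : japaneseBracket q ^ 2 = 1 + q.1 ^ 2 + q.2 ^ 2 := Real.sq_sqrt (by positivity)
  simp only [gradSq, fderiv_japaneseBracket, mul_one, mul_zero, add_zero, zero_add, div_pow, hsq,
    ← add_div]
  exact div_le_one_of_le₀ (by linarith) (by positivity)

lemma gradSq_smoothWeight_le (t : ℝ) (q : ℝ × ℝ) :
    gradSq (1, 0) (0, 1) (smoothWeight t) q ≤ 4 * smoothWeight t q :=
  gradSq_one_add_sub_sq_le (contDiff_japaneseBracket.differentiable one_ne_zero q)
    (gradSq_japaneseBracket_le_one q) t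

lemma abs_japaneseBracket_sub_rad_le_one (q : ℝ × ℝ) : |japaneseBracket q - rad q.1 q.2| ≤ 1 := by
  have hrad : 0 ≤ rad q.1 q.2 := Real.sqrt_nonneg _
  have hrad_sq : rad q.1 q.2 ^ 2 = q.1 ^ 2 + q.2 ^ 2 := Real.sq_sqrt (by positivity)
  have hlower : rad q.1 q.2 ≤ japaneseBracket q := Real.sqrt_le_sqrt (by linarith)
  have hupper : japaneseBracket q ≤ 1 + rad q.1 q.2 :=
    Real.sqrt_le_iff.2 ⟨by positivity, by linarith⟩
  exact abs_le.2 ⟨by linarith, by linarith⟩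

lemma one_add_abs_sq_le_of_abs_sub_le_one {a b : ℝ} (h : |a - b| ≤ 1) :
    (1 + |a|) ^ 2 ≤ 5 * (1 + b ^ 2) :=
  calc (1 + |a|) ^ 2 ≤ (2 + |b|) ^ 2 := by
        gcongr ?_ ^ 2
        linarith [abs_sub_abs_le_abs_sub a b]
    _ ≤ 5 * (1 + |b| ^ 2) := by linarith [sq_nonneg (2 * |b| - 1)]
    _ = 5 * (1 + b ^ 2) := by rw [sq_abs]

lemma one_add_sq_le_of_abs_sub_le_one {a b : ℝ} (h : |a - b| ≤ 1) :
    1 + b ^ 2 ≤ 2 * (1 + |a|) ^ 2 :=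
  calc 1 + b ^ 2 = 1 + |b| ^ 2 := by rw [sq_abs]
    _ ≤ 1 + (1 + |a|) ^ 2 := by
        gcongr
        linarith [abs_sub_abs_le_abs_sub b a, abs_sub_comm a b]
    _ ≤ 2 * (1 + |a|) ^ 2 := by linarith [abs_nonneg a, sq_nonneg |a|]

lemma sm_sq_le_smoothWeight (t : ℝ) (q : ℝ × ℝ) : sm t q.1 q.2 ^ 2 ≤ 5 * smoothWeight t q :=
  one_add_abs_sq_le_of_abs_sub_le_one <| by
    simpa only [sub_sub_sub_cancel_left] using abs_japaneseBracket_sub_rad_le_one q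

lemma smoothWeight_le_sm_sq (t : ℝ) (q : ℝ × ℝ) : smoothWeight t q ≤ 2 * sm t q.1 q.2 ^ 2 :=
  one_add_sq_le_of_abs_sub_le_one <| by
    simpa only [sub_sub_sub_cancel_left] using abs_japaneseBracket_sub_rad_le_one q

lemma continuous_sm (t : ℝ) : Continuous fun q : ℝ × ℝ => sm t q.1 q.2 := by
  unfold sm rad
  fun_prop

end SmoothWeight

section Plane

theorem integral_sm_sq_mul_gradSq_le (t : ℝ) {f g : ℝ × ℝ → ℝ} (hf : ContDiff ℝ 1 f)
    (hg : ContDiff ℝ 2 g) (hfc : HasCompactSupport f) (hgc : HasCompactSupport g)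
    (hcurl : ∀ q, fderiv ℝ g q (1, 0) = fderiv ℝ f q (0, 1)) :
    ∫ q, sm t q.1 q.2 ^ 2 * (gradSq (1, 0) (0, 1) f q + gradSq (1, 0) (0, 1) g q) ≤
      20 * (∫ q, sm t q.1 q.2 ^ 2 * (fderiv ℝ f q (1, 0) + fderiv ℝ g q (0, 1)) ^ 2) +
        80 * ∫ q, f q ^ 2 := by
  have hg₁ : ContDiff ℝ 1 g := hg.of_le one_le_two
  have hsm : Continuous fun q : ℝ × ℝ => sm t q.1 q.2 ^ 2 := (continuous_sm t).pow 2
  have hw : ContDiff ℝ 1 (smoothWeight t) := contDiff_smoothWeight t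
  have hlower : ∫ q, sm t q.1 q.2 ^ 2 * (gradSq (1, 0) (0, 1) f q + gradSq (1, 0) (0, 1) g q) ≤
      5 * ∫ q, smoothWeight t q * (gradSq (1, 0) (0, 1) f q + gradSq (1, 0) (0, 1) g q) := by
    rw [← integral_const_mul]
    refine integral_mono (integrable_mul_gradSq_add_gradSq hsm hf hg₁ hfc hgc _ _)
      ((integrable_mul_gradSq_add_gradSq hw.continuous hf hg₁ hfc hgc _ _).const_mul 5)
      fun q => ?_
    rw [← mul_assoc]
    exact mul_le_mul_of_nonneg_right (sm_sq_le_smoothWeight t q)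
      (add_nonneg (gradSq_nonneg _ _ f q) (gradSq_nonneg _ _ g q))
  have hupper : ∫ q, smoothWeight t q * (fderiv ℝ f q (1, 0) + fderiv ℝ g q (0, 1)) ^ 2 ≤
      2 * ∫ q, sm t q.1 q.2 ^ 2 * (fderiv ℝ f q (1, 0) + fderiv ℝ g q (0, 1)) ^ 2 := by
    rw [← integral_const_mul]
    refine integral_mono (integrable_mul_fderiv_add_fderiv_sq hw.continuous hf hg₁ hfc hgc _ _)
      ((integrable_mul_fderiv_add_fderiv_sq hsm hf hg₁ hfc hgc _ _).const_mul 2) fun q => ?_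
    rw [← mul_assoc]
    exact mul_le_mul_of_nonneg_right (smoothWeight_le_sm_sq t q) (sq_nonneg _)
  linarith [integral_mul_gradSq_add_gradSq_le (μ := volume) four_pos hw
    (gradSq_smoothWeight_le t) hf hg hfc hgc hcurl]

lemma L2n_nonneg (g : ℝ → ℝ → ℝ) : 0 ≤ L2n g := Real.sqrt_nonneg _

lemma L2n_sq (g : ℝ → ℝ → ℝ) : L2n g ^ 2 = ∫ q : ℝ × ℝ, g q.1 q.2 ^ 2 :=
  Real.sq_sqrt (integral_nonneg fun _ => sq_nonneg _)

lemma q1_eq_fderiv {v : ℝ → ℝ → ℝ} {q : ℝ × ℝ}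
    (hv : DifferentiableAt ℝ (fun p : ℝ × ℝ => v p.1 p.2) q) :
    q1 v q.1 q.2 = fderiv ℝ (fun p : ℝ × ℝ => v p.1 p.2) q (1, 0) :=
  (hv.hasFDerivAt.comp_hasDerivAt (f := fun s : ℝ => (s, q.2)) q.1
    ((hasDerivAt_id q.1).prodMk (hasDerivAt_const q.1 q.2))).deriv

lemma q2_eq_fderiv {v : ℝ → ℝ → ℝ} {q : ℝ × ℝ}
    (hv : DifferentiableAt ℝ (fun p : ℝ × ℝ => v p.1 p.2) q) :
    q2 v q.1 q.2 = fderiv ℝ (fun p : ℝ × ℝ => v p.1 p.2) q (0, 1) :=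
  (hv.hasFDerivAt.comp_hasDerivAt (f := fun s : ℝ => (q.1, s)) q.2
    ((hasDerivAt_const q.2 q.1).prodMk (hasDerivAt_id q.2))).deriv

variable {v1 v2 : ℝ → ℝ → ℝ}

lemma L2n_sm_mul_grad_sq_le (t : ℝ) (hv1 : ContDiff ℝ 1 fun q : ℝ × ℝ => v1 q.1 q.2)
    (hv2 : ContDiff ℝ 2 fun q : ℝ × ℝ => v2 q.1 q.2)
    (hc1 : HasCompactSupport fun q : ℝ × ℝ => v1 q.1 q.2)
    (hc2 : HasCompactSupport fun q : ℝ × ℝ => v2 q.1 q.2)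
    (hcurl : ∀ x y, q1 v2 x y - q2 v1 x y = 0) :
    L2n (fun x y => sm t x y *
        √(q1 v1 x y ^ 2 + q2 v1 x y ^ 2 + q1 v2 x y ^ 2 + q2 v2 x y ^ 2)) ^ 2 ≤
      20 * L2n (fun x y => sm t x y * (q1 v1 x y + q2 v2 x y)) ^ 2 + 80 * L2n v1 ^ 2 := by
  have hd1 := hv1.differentiable one_ne_zero
  have hd2 := hv2.differentiable two_ne_zero
  have hgrad (q : ℝ × ℝ) :
      √(q1 v1 q.1 q.2 ^ 2 + q2 v1 q.1 q.2 ^ 2 + q1 v2 q.1 q.2 ^ 2 + q2 v2 q.1 q.2 ^ 2) ^ 2 =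
        gradSq (1, 0) (0, 1) (fun p : ℝ × ℝ => v1 p.1 p.2) q +
          gradSq (1, 0) (0, 1) (fun p : ℝ × ℝ => v2 p.1 p.2) q := by
    rw [Real.sq_sqrt (by positivity), q1_eq_fderiv (hd1 q), q2_eq_fderiv (hd1 q),
      q1_eq_fderiv (hd2 q), q2_eq_fderiv (hd2 q), gradSq, gradSq, ← add_assoc]
  have hcurl' (q : ℝ × ℝ) : fderiv ℝ (fun p : ℝ × ℝ => v2 p.1 p.2) q (1, 0) =
      fderiv ℝ (fun p : ℝ × ℝ => v1 p.1 p.2) q (0, 1) := by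
    rw [← q1_eq_fderiv (hd2 q), ← q2_eq_fderiv (hd1 q)]
    exact sub_eq_zero.1 (hcurl q.1 q.2)
  simp only [L2n_sq, mul_pow, hgrad]
  simp only [q1_eq_fderiv (hd1 _), q2_eq_fderiv (hd2 _)]
  exact integral_sm_sq_mul_gradSq_le t hv1 hv2 hc1 hc2 hcurl'

lemma L2n_left_le_L2n_sqrt (hv1 : Continuous fun q : ℝ × ℝ => v1 q.1 q.2)
    (hv2 : Continuous fun q : ℝ × ℝ => v2 q.1 q.2)
    (hc1 : HasCompactSupport fun q : ℝ × ℝ => v1 q.1 q.2)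
    (hc2 : HasCompactSupport fun q : ℝ × ℝ => v2 q.1 q.2) :
    L2n v1 ≤ L2n fun x y => √(v1 x y ^ 2 + v2 x y ^ 2) := by
  have hv1_sq := integrable_sq_of_hasCompactSupport (μ := volume) hv1 hc1
  have hv2_sq := integrable_sq_of_hasCompactSupport (μ := volume) hv2 hc2
  refine Real.sqrt_le_sqrt (integral_mono hv1_sq ?_ fun q => ?_)
  · simp only [Real.sq_sqrt (add_nonneg (sq_nonneg _) (sq_nonneg _))]
    exact hv1_sq.add hv2_sq
  · rw [Real.sq_sqrt (by positivity)]
    exact le_add_of_nonneg_right (sq_nonneg _)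

theorem weighted_divcurl_estimate_general (t : ℝ)
    (hv1 : ContDiff ℝ 1 fun q : ℝ × ℝ => v1 q.1 q.2)
    (hv2 : ContDiff ℝ 2 fun q : ℝ × ℝ => v2 q.1 q.2)
    (hc1 : HasCompactSupport fun q : ℝ × ℝ => v1 q.1 q.2)
    (hc2 : HasCompactSupport fun q : ℝ × ℝ => v2 q.1 q.2)
    (hcurl : ∀ x y, q1 v2 x y - q2 v1 x y = 0) :
    L2n (fun x y => sm t x y *
        √(q1 v1 x y ^ 2 + q2 v1 x y ^ 2 + q1 v2 x y ^ 2 + q2 v2 x y ^ 2)) ≤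
      9 * (L2n (fun x y => sm t x y * (q1 v1 x y + q2 v2 x y)) +
        L2n fun x y => √(v1 x y ^ 2 + v2 x y ^ 2)) := by
  have hgrad := L2n_sm_mul_grad_sq_le t hv1 hv2 hc1 hc2 hcurl
  have hmass := pow_le_pow_left₀ (L2n_nonneg v1)
    (L2n_left_le_L2n_sqrt hv1.continuous hv2.continuous hc1 hc2) 2
  set gradNorm := L2n fun x y => sm t x y *
    √(q1 v1 x y ^ 2 + q2 v1 x y ^ 2 + q1 v2 x y ^ 2 + q2 v2 x y ^ 2)
  set divNorm := L2n fun x y => sm t x y * (q1 v1 x y + q2 v2 x y)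
  set vNorm := L2n fun x y => √(v1 x y ^ 2 + v2 x y ^ 2)
  have hdiv : 0 ≤ divNorm := L2n_nonneg _
  have hv : 0 ≤ vNorm := L2n_nonneg _
  refine le_of_sq_le_sq ?_ (by positivity)
  calc gradNorm ^ 2 ≤ 20 * divNorm ^ 2 + 80 * vNorm ^ 2 := by linarith
    _ ≤ (9 * (divNorm + vNorm)) ^ 2 := by
        linarith [mul_nonneg hdiv hv, sq_nonneg divNorm, sq_nonneg vNorm]

end Plane

/-- **Weighted div-curl estimate** (Lemma 2.3 (1)):  if `v ∈ C₀^∞(ℝ²;ℝ²)` is curl-free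
(`∇·v^⊥ = 0`), then `‖σ₋∇v‖ ≤ C(‖σ₋∇·v‖ + ‖v‖)` with `C` independent of `t` and `v`. -/
theorem weighted_divcurl_estimate :
    ∃ C > 0, ∀ t : ℝ, 0 ≤ t → ∀ v1 v2 : ℝ → ℝ → ℝ,
      ContDiff ℝ (⊤ : ℕ∞) (fun q : ℝ × ℝ => v1 q.1 q.2) →
      ContDiff ℝ (⊤ : ℕ∞) (fun q : ℝ × ℝ => v2 q.1 q.2) →
      HasCompactSupport (fun q : ℝ × ℝ => v1 q.1 q.2) →
      HasCompactSupport (fun q : ℝ × ℝ => v2 q.1 q.2) →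
      (∀ x y, q1 v2 x y - q2 v1 x y = 0) →
      L2n (fun x y => sm t x y *
          Real.sqrt ((q1 v1 x y) ^ 2 + (q2 v1 x y) ^ 2 + (q1 v2 x y) ^ 2 + (q2 v2 x y) ^ 2))
        ≤ C * (L2n (fun x y => sm t x y * (q1 v1 x y + q2 v2 x y))
          + L2n (fun x y => Real.sqrt ((v1 x y) ^ 2 + (v2 x y) ^ 2))) :=
  ⟨9, by norm_num, fun t _ _ _ h1 h2 hc1 hc2 hcurl => weighted_divcurl_estimate_general t
    (mod_cast contDiff_infty.1 h1 1) (mod_cast contDiff_infty.1 h2 2) hc1 hc2 hcurl⟩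

end
end
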